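/- Every simple graph of order n ≥ 5 with at least 4n − 9 edges contains a K_6 minor. -/

import Mathlib

attribute [local instance] Classical.propDecidable

/-- `G` contains a `K_t` minor: `t` pairwise disjoint nonempty branch sets, each inducing a
connected subgraph of `G`, with an edge of `G` between any two of them. -/
def SimpleGraph.HasCompleteMinor {V : Type*} (G : SimpleGraph V) (t : ℕ) : Prop :=
  ∃ B : Fin t → Set V,
    (∀ i, (B i).Nonempty) ∧
    (∀ i, (G.induce (B i)).Connected) ∧
    (∀ i j, i ≠ j → Disjoint (B i) (B j)) ∧
    (∀ i j, i ≠ j → ∃ u ∈ B i, ∃ v ∈ B j, G.Adj u v)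

namespace K6

/-! ### The finite check on seven vertices -/

/-- A `K₅` model on seven vertices: three singletons and two pairs. -/
def modelOK (A : ℕ → ℕ → Bool) : List ℕ → Bool
  | [p, q, r, s, t, u, v] =>
    A p q && A p r && A q r && A s t && A u v &&
    (A p s || A p t) && (A q s || A q t) && (A r s || A r t) &&
    (A p u || A p v) && (A q u || A q v) && (A r u || A r v) &&
    (A s u || A s v || A t u || A t v)
  | _ => false

lemma modelOK_mono {A B : ℕ → ℕ → Bool} (h : ∀ i j, A i j = true → B i j = true) (l : List ℕ)
    (hl : modelOK A l = true) : modelOK B l = true := by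
  unfold modelOK at *
  split at hl
  · simp only [Bool.and_eq_true, Bool.or_eq_true] at *
    grind
  · simp at hl

/-- the bit of the pair `(i, j)` in the mask `m` -/
def look (m i j : ℕ) : Bool := Nat.blt j 7 && Nat.testBit m (7 * i + j)

/-- vertex `i` has too many non-neighbours -/
def tooMany (m i : ℕ) : Bool :=
  Nat.blt 2 (((List.range 7).filter (fun j => look m i j)).length)

/-- add the pair `(i, j)` to the mask -/
def setb (m i j : ℕ) : ℕ := m ||| (2 ^ (7 * i + j)) ||| (2 ^ (7 * j + i))

/-- the well-formedness test for a model -/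
def wf : List ℕ → Bool
  | [p, q, r, s, t, u, v] =>
    (List.range 7).all (fun i => [p, q, r, s, t, u, v].any (fun j => Nat.beq i j))
  | _ => false

/-- Decision trees: a leaf names a model, `nd i j` branches on the adjacency of `i` and `j`,
and `fc i j` records that non-adjacency of `i` and `j` would violate the degree condition. -/
inductive Tree where
  | lf : ℕ → ℕ → ℕ → ℕ → ℕ → ℕ → ℕ → Tree
  | fc : ℕ → ℕ → Tree → Tree
  | nd : ℕ → ℕ → Tree → Tree → Tree

/-- is `(i, j)` a pair of distinct numbers below seven? -/
def okPair (i j : ℕ) : Bool := Nat.blt i j && Nat.blt j 7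

/-- verification of a decision tree; `T` is the set of known non-adjacent pairs, `F` the set of
known adjacent pairs -/
def chk : Tree → ℕ → ℕ → Bool
  | .lf p q r s t u v, _, F => wf [p, q, r, s, t, u, v] && modelOK (look F) [p, q, r, s, t, u, v]
  | .fc i j t, T, F => okPair i j && (tooMany (setb T i j) i || tooMany (setb T i j) j) &&
      chk t T (setb F i j)
  | .nd i j t t', T, F => okPair i j && chk t T (setb F i j) && chk t' (setb T i j) F

open K6.Tree in
/-- the decision tree for seven vertices -/
def tree : Tree :=
  nd 3 4 (nd 5 6 (nd 2 3 (nd 0 2 (nd 2 5 (nd 4 6 (nd 1 3 (nd 1 5 (nd 0 4 (nd 0 6 (nd 3 6 (nd 4 5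
  (lf 0 4 6 1 3 2 5) (nd 1 4 (lf 0 1 4 2 3 5 6) (fc 1 2 (lf 0 1 2 3 4 5 6)))) (nd 1 6 (lf 0 1 6 2
  5 3 4) (fc 1 2 (lf 0 1 2 3 4 5 6)))) (nd 1 6 (fc 0 3 (lf 0 1 3 2 5 4 6)) (fc 0 5 (fc 1 2 (lf 0 1
  2 3 4 5 6))))) (nd 1 4 (fc 0 3 (fc 0 6 (lf 0 1 3 2 5 4 6))) (fc 0 3 (fc 1 2 (fc 0 5 (lf 0 1 2 3
  4 5 6)))))) (nd 0 4 (nd 0 5 (fc 1 2 (fc 1 6 (lf 0 1 2 3 4 5 6))) (fc 1 2 (fc 0 6 (fc 1 6 (lf 0 1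
  2 3 4 5 6))))) (fc 0 3 (fc 1 2 (fc 0 5 (fc 1 6 (lf 0 1 2 3 4 5 6))))))) (nd 0 6 (nd 0 3 (fc 1 2
  (fc 1 5 (fc 1 4 (lf 0 1 2 3 4 5 6)))) (fc 1 2 (fc 0 4 (fc 1 5 (fc 1 4 (lf 0 1 2 3 4 5 6))))))
  (fc 1 5 (fc 0 5 (fc 0 3 (fc 1 2 (fc 1 4 (lf 0 1 2 3 4 5 6)))))))) (nd 3 6 (nd 4 5 (nd 1 4 (nd 1
  6 (nd 0 4 (nd 0 6 (nd 1 2 (lf 0 1 2 3 4 5 6) (fc 1 3 (lf 0 1 4 2 3 5 6))) (fc 0 3 (lf 0 3 4 1 6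
  2 5))) (fc 0 3 (fc 0 6 (lf 0 3 6 1 4 2 5)))) (fc 1 2 (fc 0 6 (fc 1 3 (lf 1 2 3 0 6 4 5))))) (fc
  1 2 (fc 0 4 (fc 1 3 (fc 1 5 (lf 1 2 3 0 4 5 6)))))) (nd 1 5 (nd 0 6 (fc 0 4 (fc 1 4 (fc 2 4 (lf
  0 2 4 1 5 3 6)))) (fc 0 3 (fc 0 5 (fc 1 4 (fc 2 4 (lf 0 2 3 1 4 5 6)))))) (fc 1 3 (fc 1 6 (fc 0
  5 (fc 0 4 (fc 1 2 (lf 0 1 2 3 4 5 6)))))))) (nd 4 5 (nd 1 3 (nd 0 4 (fc 2 6 (fc 0 6 (fc 1 6 (lf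
  0 2 6 1 3 4 5)))) (fc 0 3 (fc 2 6 (fc 0 5 (fc 1 6 (lf 0 2 3 1 6 4 5)))))) (fc 1 5 (fc 0 3 (fc 1
  2 (fc 0 6 (fc 1 4 (lf 0 1 2 3 4 5 6))))))) (nd 3 5 (nd 0 3 (fc 0 6 (fc 1 4 (fc 2 4 (fc 1 6 (lf 0
  2 3 1 4 5 6))))) (fc 1 3 (fc 1 6 (fc 0 5 (fc 0 4 (fc 2 6 (lf 0 2 5 1 6 3 4))))))) (fc 1 3 (fc 1
  6 (fc 2 4 (fc 0 4 (fc 0 3 (fc 1 4 (lf 0 3 4 1 6 2 5))))))))))) (nd 2 6 (nd 0 4 (nd 1 3 (nd 1 5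
  (nd 4 5 (nd 1 2 (nd 0 5 (lf 0 1 2 3 4 5 6) (fc 0 6 (lf 0 1 2 3 4 5 6))) (nd 0 5 (fc 1 4 (lf 0 1
  4 2 3 5 6)) (fc 0 3 (fc 1 6 (lf 0 1 3 2 6 4 5))))) (nd 1 2 (fc 0 5 (fc 3 5 (lf 0 1 2 3 4 5 6)))
  (fc 0 5 (fc 3 5 (fc 1 6 (lf 0 1 5 2 6 3 4)))))) (fc 0 5 (fc 1 2 (fc 3 5 (fc 1 6 (lf 0 1 2 3 4 5
  6)))))) (nd 0 5 (nd 3 5 (fc 1 2 (fc 1 5 (fc 1 4 (lf 0 1 2 3 4 5 6)))) (fc 1 2 (fc 3 6 (fc 1 5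
  (fc 1 4 (lf 0 1 2 3 4 5 6)))))) (fc 3 5 (fc 1 5 (fc 1 2 (fc 0 6 (fc 1 4 (lf 0 1 2 3 4 5
  6)))))))) (nd 1 4 (nd 3 5 (nd 4 6 (nd 1 2 (fc 0 3 (fc 0 5 (lf 0 2 3 1 4 5 6))) (fc 0 3 (fc 0 5
  (fc 2 4 (lf 0 2 3 1 4 5 6))))) (fc 0 3 (fc 0 5 (fc 2 4 (fc 4 5 (lf 0 2 3 1 4 5 6)))))) (nd 1 2
  (fc 0 3 (fc 0 5 (fc 1 5 (fc 4 5 (lf 0 1 2 3 4 5 6))))) (fc 1 3 (fc 1 6 (fc 0 5 (fc 4 5 (fc 0 3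
  (lf 0 1 3 2 6 4 5)))))))) (fc 1 3 (fc 1 5 (fc 0 5 (fc 4 5 (fc 0 3 (fc 1 2 (lf 0 1 2 3 4 5
  6))))))))) (nd 0 5 (nd 1 6 (nd 3 5 (nd 4 6 (nd 1 3 (fc 1 2 (fc 2 4 (lf 1 2 3 0 5 4 6))) (nd 0 6
  (fc 1 2 (fc 1 5 (lf 0 1 5 2 3 4 6))) (fc 0 4 (fc 1 2 (fc 1 4 (lf 0 1 4 2 3 5 6)))))) (nd 4 5 (nd
  1 4 (fc 0 6 (fc 3 6 (lf 0 5 6 1 4 2 3))) (fc 1 2 (fc 0 6 (fc 1 5 (fc 3 6 (lf 0 1 6 2 3 4 5))))))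
  (fc 1 4 (fc 0 4 (fc 1 2 (fc 2 4 (lf 0 2 4 1 6 3 5))))))) (nd 3 6 (nd 0 3 (fc 1 2 (fc 2 4 (fc 4 5
  (lf 0 2 3 1 6 4 5)))) (fc 1 2 (fc 0 6 (fc 1 5 (fc 4 5 (lf 0 1 6 2 3 4 5)))))) (fc 1 3 (fc 2 4
  (fc 4 5 (fc 0 3 (fc 1 2 (lf 0 2 3 1 6 4 5)))))))) (fc 1 3 (fc 1 5 (fc 2 4 (fc 3 6 (fc 4 6 (fc 1
  4 (lf 1 3 4 0 2 5 6)))))))) (fc 3 5 (fc 1 5 (fc 2 4 (fc 0 4 (fc 4 5 (fc 0 3 (fc 1 2 (fc 0 6 (lf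
  0 3 4 1 2 5 6)))))))))))) (nd 1 2 (nd 4 5 (nd 3 6 (nd 2 5 (nd 1 4 (fc 0 3 (fc 0 4 (fc 0 5 (lf 0
  3 4 1 2 5 6)))) (fc 0 3 (fc 0 4 (fc 0 6 (fc 1 6 (lf 0 3 6 1 2 4 5)))))) (fc 2 4 (fc 0 5 (fc 0 4
  (fc 0 3 (fc 2 6 (lf 0 3 4 1 2 5 6))))))) (nd 2 6 (nd 1 4 (nd 3 5 (fc 0 3 (fc 0 4 (fc 0 5 (lf 0 3
  4 1 2 5 6)))) (fc 0 3 (fc 0 4 (fc 0 6 (fc 1 3 (lf 0 1 3 2 6 4 5)))))) (fc 1 3 (fc 1 5 (fc 0 4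
  (fc 0 3 (fc 0 6 (lf 0 1 3 2 6 4 5))))))) (fc 1 6 (fc 0 5 (fc 0 4 (fc 2 5 (fc 0 3 (fc 4 6 (lf 0 4
  5 1 6 2 3))))))))) (nd 2 5 (nd 4 6 (nd 1 4 (nd 1 6 (fc 0 3 (fc 0 4 (fc 0 5 (lf 0 1 4 2 3 5 6))))
  (fc 0 3 (fc 0 4 (fc 0 5 (fc 1 3 (lf 0 1 3 2 5 4 6)))))) (fc 1 3 (fc 1 6 (fc 0 5 (fc 0 4 (fc 0 3
  (lf 0 1 3 2 5 4 6))))))) (nd 1 3 (fc 2 4 (fc 0 4 (fc 0 3 (fc 0 6 (fc 1 4 (lf 1 3 4 0 6 2 5))))))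
  (nd 3 6 (fc 1 6 (fc 0 5 (fc 0 3 (fc 0 6 (fc 1 4 (lf 0 1 6 2 5 3 4)))))) (fc 3 5 (fc 1 5 (fc 0 3
  (fc 2 6 (fc 0 6 (fc 1 4 (lf 1 2 5 0 6 3 4)))))))))) (nd 1 4 (fc 3 5 (fc 1 5 (fc 0 5 (fc 2 6 (fc
  0 3 (fc 0 6 (lf 0 1 5 2 6 3 4))))))) (fc 1 6 (fc 3 5 (fc 1 5 (fc 0 5 (fc 0 4 (fc 0 3 (fc 4 6 (lf
  0 1 5 2 3 4 6))))))))))) (fc 1 3 (fc 1 5 (fc 2 4 (fc 0 4 (fc 0 3 (fc 2 6 (fc 0 6 (fc 1 4 (lf 0 3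
  4 1 5 2 6))))))))))) (nd 2 4 (nd 0 2 (nd 1 5 (nd 0 6 (nd 2 5 (nd 1 3 (nd 3 6 (nd 1 2 (nd 0 3 (lf
  0 1 2 3 4 5 6) (fc 0 4 (lf 0 1 2 3 4 5 6))) (nd 0 3 (fc 1 4 (lf 0 1 3 2 4 5 6)) (fc 0 4 (fc 1 4
  (lf 0 1 4 2 5 3 6))))) (nd 1 2 (fc 0 3 (fc 3 5 (lf 0 1 2 3 4 5 6))) (fc 0 3 (fc 3 5 (fc 1 4 (lf
  0 1 3 2 4 5 6)))))) (fc 0 3 (fc 1 2 (fc 3 5 (fc 1 4 (lf 0 1 2 3 4 5 6)))))) (nd 0 3 (nd 4 5 (nd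
  1 3 (fc 2 6 (fc 1 2 (lf 0 1 2 3 4 5 6))) (fc 2 6 (fc 1 2 (fc 1 4 (lf 0 1 2 3 4 5 6))))) (nd 1 3
  (fc 2 6 (fc 1 2 (fc 3 5 (lf 0 1 2 3 4 5 6)))) (fc 2 6 (fc 1 2 (fc 3 5 (fc 1 4 (lf 0 1 2 3 4 5
  6))))))) (fc 1 3 (fc 3 5 (fc 0 4 (fc 2 6 (fc 1 2 (lf 0 1 2 3 4 5 6)))))))) (nd 1 2 (nd 1 3 (nd 2
  6 (nd 3 6 (fc 0 3 (fc 0 5 (lf 0 1 2 3 4 5 6))) (fc 0 3 (fc 3 5 (fc 0 5 (lf 0 1 2 3 4 5 6)))))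
  (fc 0 3 (fc 0 5 (fc 3 6 (fc 2 5 (lf 0 1 2 3 4 5 6)))))) (nd 2 6 (fc 0 3 (fc 3 5 (fc 0 5 (fc 1 4
  (lf 0 1 2 3 4 5 6))))) (fc 3 5 (fc 0 5 (fc 2 5 (fc 0 3 (fc 1 4 (lf 0 1 2 3 4 5 6)))))))) (nd 3 6
  (fc 1 3 (fc 0 5 (fc 2 5 (fc 0 3 (fc 1 4 (lf 0 1 3 2 4 5 6)))))) (fc 1 3 (fc 3 5 (fc 0 5 (fc 2 5
  (fc 0 3 (fc 1 4 (lf 0 1 3 2 4 5 6)))))))))) (nd 0 3 (nd 2 5 (nd 3 5 (nd 0 6 (fc 1 2 (fc 1 3 (fc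
  1 6 (lf 0 1 2 3 4 5 6)))) (fc 0 5 (fc 1 2 (fc 1 3 (fc 1 6 (lf 0 1 2 3 4 5 6)))))) (fc 1 3 (fc 1
  6 (fc 0 5 (fc 3 6 (fc 1 2 (lf 0 1 2 3 4 5 6))))))) (fc 1 3 (fc 1 6 (fc 3 5 (fc 0 5 (fc 2 6 (fc 1
  2 (lf 0 1 2 3 4 5 6)))))))) (nd 2 5 (fc 1 3 (fc 1 6 (fc 3 5 (fc 0 5 (fc 0 4 (fc 1 2 (lf 0 1 2 3
  4 5 6))))))) (fc 1 3 (fc 1 6 (fc 3 5 (fc 0 5 (fc 0 4 (fc 2 6 (fc 1 2 (lf 0 1 2 3 4 5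
  6))))))))))) (nd 3 5 (nd 3 6 (fc 0 5 (fc 2 5 (fc 0 3 (fc 2 6 (fc 1 2 (fc 0 6 (lf 0 5 6 1 2 3
  4))))))) (nd 1 6 (fc 1 3 (fc 0 5 (fc 0 4 (fc 2 5 (fc 0 3 (fc 1 2 (lf 0 1 3 2 4 5 6))))))) (fc 1
  3 (fc 1 5 (fc 0 5 (fc 0 4 (fc 2 5 (fc 0 3 (fc 1 2 (lf 0 1 3 2 4 5 6)))))))))) (nd 1 5 (fc 1 3
  (fc 0 5 (fc 0 4 (fc 2 5 (fc 3 6 (fc 0 3 (fc 1 2 (lf 0 1 3 2 4 5 6)))))))) (fc 1 3 (fc 1 6 (fc 0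
  5 (fc 0 4 (fc 2 5 (fc 3 6 (fc 0 3 (fc 1 2 (lf 0 1 3 2 4 5 6)))))))))))) (nd 0 3 (nd 1 4 (nd 3 5
  (nd 4 6 (nd 1 5 (fc 2 6 (fc 1 2 (fc 2 5 (fc 0 2 (lf 1 2 5 0 3 4 6))))) (nd 0 4 (fc 1 2 (fc 2 5
  (fc 1 3 (fc 0 2 (lf 0 1 3 2 5 4 6))))) (fc 1 3 (fc 2 5 (fc 0 2 (fc 1 2 (fc 0 6 (lf 0 1 3 2 5 4
  6)))))))) (nd 3 6 (nd 1 6 (fc 0 4 (fc 2 5 (fc 0 2 (fc 4 5 (lf 0 3 4 1 6 2 5))))) (fc 1 3 (fc 0 4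
  (fc 0 2 (fc 4 5 (fc 2 6 (fc 1 2 (lf 0 1 3 2 6 4 5)))))))) (fc 1 6 (fc 2 5 (fc 0 2 (fc 2 6 (fc 1
  2 (fc 0 6 (lf 0 2 6 1 4 3 5))))))))) (nd 4 5 (nd 0 5 (fc 1 3 (fc 3 6 (fc 0 2 (fc 2 6 (fc 1 2 (lf
  0 1 3 2 6 4 5)))))) (fc 1 3 (fc 0 4 (fc 3 6 (fc 0 2 (fc 2 6 (fc 1 2 (lf 0 1 3 2 6 4 5))))))))
  (fc 1 5 (fc 0 5 (fc 2 5 (fc 3 6 (fc 0 2 (fc 2 6 (fc 1 2 (lf 0 2 5 1 4 3 6)))))))))) (fc 1 3 (fc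
  1 6 (fc 1 5 (fc 2 5 (fc 0 2 (fc 4 5 (fc 2 6 (fc 4 6 (lf 1 5 6 0 2 3 4)))))))))) (fc 1 3 (fc 3 5
  (fc 0 5 (fc 0 4 (fc 2 5 (fc 3 6 (fc 2 6 (fc 1 2 (fc 0 6 (lf 0 5 6 1 2 3 4))))))))))))) (nd 2 6
  (nd 2 5 (nd 0 5 (nd 1 3 (nd 0 4 (nd 3 5 (nd 1 6 (nd 4 6 (nd 1 5 (nd 0 6 (lf 0 1 5 2 6 3 4) (fc 0
  3 (lf 0 1 3 2 5 4 6))) (nd 0 6 (fc 1 4 (lf 0 1 4 2 6 3 5)) (fc 1 2 (fc 0 2 (lf 0 1 2 3 5 4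
  6))))) (nd 1 5 (fc 0 6 (fc 3 6 (lf 0 1 5 2 6 3 4))) (fc 1 2 (fc 0 6 (fc 3 6 (lf 0 1 6 2 5 3
  4)))))) (fc 1 2 (fc 0 6 (fc 4 6 (fc 1 4 (lf 0 1 4 2 6 3 5)))))) (nd 0 6 (nd 2 3 (nd 1 6 (fc 1 5
  (fc 4 5 (lf 0 1 5 2 6 3 4))) (fc 1 2 (fc 1 5 (fc 4 5 (lf 0 1 5 2 6 3 4))))) (nd 1 6 (fc 1 5 (fc
  3 6 (fc 4 5 (lf 0 1 5 2 6 3 4)))) (fc 1 2 (fc 3 6 (fc 1 4 (fc 4 5 (lf 0 1 4 2 5 3 6))))))) (fc 1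
  6 (fc 1 5 (fc 3 6 (fc 0 2 (fc 4 5 (lf 0 1 5 2 6 3 4)))))))) (nd 1 5 (nd 1 6 (nd 4 5 (nd 4 6 (fc
  0 3 (fc 0 2 (lf 0 1 5 2 6 3 4))) (fc 0 3 (fc 3 6 (fc 0 2 (lf 0 1 3 2 6 4 5))))) (fc 0 3 (fc 3 5
  (fc 0 6 (fc 4 6 (lf 0 1 3 2 5 4 6)))))) (nd 4 5 (fc 0 3 (fc 1 2 (fc 3 6 (fc 0 2 (lf 0 1 2 3 6 4
  5))))) (fc 3 5 (fc 0 3 (fc 0 6 (fc 4 6 (fc 1 4 (lf 0 1 3 2 5 4 6)))))))) (nd 4 6 (fc 3 5 (fc 0 2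
  (fc 1 2 (fc 0 6 (fc 1 4 (lf 0 1 2 3 5 4 6)))))) (fc 3 6 (fc 0 2 (fc 4 5 (fc 0 3 (fc 1 2 (fc 1 4
  (lf 0 1 2 3 6 4 5)))))))))) (nd 0 6 (nd 3 5 (nd 3 6 (nd 0 4 (fc 1 2 (fc 1 5 (fc 1 4 (lf 0 1 5 2
  6 3 4)))) (fc 0 3 (fc 1 2 (fc 1 5 (fc 1 4 (lf 0 1 5 2 6 3 4)))))) (fc 1 5 (fc 0 3 (fc 1 2 (fc 2
  3 (fc 1 4 (lf 0 1 5 2 6 3 4))))))) (fc 1 5 (fc 4 5 (fc 0 3 (fc 1 2 (fc 2 3 (fc 1 4 (lf 0 1 5 2 6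
  3 4)))))))) (nd 3 5 (fc 1 5 (fc 0 4 (fc 0 2 (fc 1 2 (fc 4 6 (fc 1 4 (lf 0 1 2 3 5 4 6))))))) (fc
  1 6 (fc 3 6 (fc 0 2 (fc 4 5 (fc 0 3 (fc 1 2 (fc 1 4 (lf 0 1 2 3 6 4 5))))))))))) (nd 3 6 (nd 4 6
  (fc 3 5 (fc 1 5 (fc 0 4 (fc 0 2 (fc 4 5 (fc 0 3 (lf 0 3 4 1 5 2 6))))))) (nd 1 4 (fc 1 6 (fc 1 5
  (fc 0 4 (fc 0 2 (fc 4 5 (fc 0 3 (lf 0 1 4 2 5 3 6))))))) (fc 1 3 (fc 1 5 (fc 0 4 (fc 0 2 (fc 4 5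
  (fc 0 3 (fc 1 2 (lf 0 1 2 3 6 4 5)))))))))) (nd 1 3 (fc 1 6 (fc 3 5 (fc 1 5 (fc 0 4 (fc 0 2 (fc
  0 3 (fc 4 6 (lf 0 1 3 2 5 4 6)))))))) (fc 3 5 (fc 1 5 (fc 0 4 (fc 0 2 (fc 0 3 (fc 1 2 (fc 4 6
  (fc 1 4 (lf 0 1 2 3 5 4 6)))))))))))) (nd 0 2 (nd 1 6 (nd 2 3 (nd 4 6 (nd 1 3 (fc 0 5 (fc 3 5
  (fc 1 5 (fc 4 5 (lf 1 3 5 0 2 4 6))))) (nd 0 6 (fc 0 5 (fc 1 2 (fc 3 5 (fc 1 5 (lf 0 1 2 3 5 4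
  6))))) (fc 3 5 (fc 1 5 (fc 0 4 (fc 0 3 (fc 1 2 (lf 0 1 2 3 5 4 6)))))))) (nd 2 4 (nd 1 4 (fc 0 5
  (fc 3 5 (fc 0 6 (fc 3 6 (lf 0 2 6 1 4 3 5))))) (fc 1 5 (fc 0 4 (fc 3 6 (fc 4 5 (fc 1 2 (fc 0 6
  (lf 0 1 2 3 6 4 5)))))))) (fc 3 5 (fc 0 5 (fc 3 6 (fc 1 2 (fc 0 6 (fc 1 4 (lf 0 2 6 1 4 3
  5))))))))) (nd 3 6 (nd 0 3 (fc 1 5 (fc 2 4 (fc 0 5 (fc 4 5 (fc 1 2 (lf 0 1 2 3 6 4 5)))))) (fc 1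
  5 (fc 2 4 (fc 0 4 (fc 4 5 (fc 1 2 (fc 0 6 (lf 0 1 2 3 6 4 5)))))))) (fc 1 3 (fc 2 4 (fc 0 5 (fc
  4 5 (fc 1 2 (fc 0 6 (fc 4 6 (lf 0 2 6 1 3 4 5)))))))))) (fc 1 3 (fc 3 5 (fc 0 5 (fc 3 6 (fc 4 5
  (fc 1 2 (fc 4 6 (fc 1 4 (lf 1 3 4 0 5 2 6)))))))))) (fc 3 5 (fc 1 5 (fc 2 4 (fc 0 4 (fc 4 5 (fc
  0 3 (fc 1 2 (fc 2 3 (fc 0 6 (lf 0 3 4 1 5 2 6)))))))))))) (nd 2 3 (nd 0 2 (nd 4 5 (nd 1 2 (nd 1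
  5 (nd 0 4 (fc 0 6 (fc 4 6 (fc 3 6 (fc 1 6 (lf 0 1 6 2 3 4 5))))) (fc 1 6 (fc 0 5 (fc 3 6 (fc 0 6
  (fc 4 6 (lf 0 1 6 2 3 4 5))))))) (fc 1 3 (fc 0 5 (fc 2 5 (fc 3 6 (fc 0 6 (fc 1 4 (lf 0 1 2 3 6 4
  5)))))))) (fc 1 3 (fc 1 5 (fc 2 5 (fc 3 6 (fc 0 6 (fc 4 6 (fc 1 4 (lf 1 3 4 0 6 2 5))))))))) (nd
  2 4 (nd 1 4 (fc 3 5 (fc 1 5 (fc 0 5 (fc 2 5 (fc 3 6 (fc 0 6 (lf 0 2 5 1 4 3 6))))))) (fc 1 3 (fc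
  1 6 (fc 3 5 (fc 0 5 (fc 0 4 (fc 1 2 (fc 4 6 (lf 0 1 2 3 5 4 6))))))))) (fc 3 5 (fc 1 5 (fc 0 5
  (fc 2 5 (fc 3 6 (fc 1 2 (fc 0 6 (fc 1 4 (lf 0 2 5 1 4 3 6))))))))))) (fc 1 6 (fc 2 4 (fc 0 5 (fc
  0 4 (fc 2 5 (fc 3 6 (fc 0 3 (fc 1 2 (fc 4 6 (lf 0 3 4 1 6 2 5))))))))))) (nd 3 5 (nd 0 3 (nd 1 5
  (fc 1 6 (fc 2 4 (fc 2 5 (fc 0 2 (fc 1 2 (fc 0 6 (fc 4 6 (lf 0 1 2 3 5 4 6)))))))) (fc 1 3 (fc 2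
  4 (fc 2 5 (fc 0 2 (fc 1 2 (fc 0 6 (fc 4 6 (fc 1 4 (lf 0 1 2 3 5 4 6)))))))))) (fc 1 3 (fc 1 6
  (fc 2 4 (fc 0 5 (fc 0 4 (fc 2 5 (fc 0 2 (fc 1 2 (fc 4 6 (lf 0 1 2 3 5 4 6))))))))))) (fc 1 3 (fc
  1 5 (fc 2 4 (fc 0 5 (fc 2 5 (fc 0 2 (fc 4 5 (fc 1 2 (fc 0 6 (fc 4 6 (lf 0 2 5 1 3 4
  6))))))))))))))) (nd 4 6 (nd 3 6 (nd 2 3 (nd 4 5 (nd 0 2 (nd 3 5 (nd 2 4 (nd 1 5 (nd 0 6 (nd 1 3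
  (nd 1 4 (nd 0 5 (lf 0 1 5 2 3 4 6) (nd 2 5 (lf 1 3 5 0 2 4 6) (fc 5 6 (lf 1 3 5 0 6 2 4)))) (fc
  1 2 (lf 1 2 3 0 6 4 5))) (fc 0 3 (fc 1 2 (lf 0 2 3 1 5 4 6)))) (nd 1 2 (fc 0 3 (fc 0 4 (lf 0 2 3
  1 5 4 6))) (fc 0 3 (fc 0 5 (fc 1 6 (lf 0 3 5 1 6 2 4)))))) (nd 0 6 (fc 1 2 (fc 1 3 (fc 1 4 (lf 1
  2 3 0 6 4 5)))) (fc 0 3 (fc 1 2 (fc 0 4 (fc 1 6 (lf 0 2 3 1 6 4 5))))))) (nd 1 3 (nd 2 5 (nd 2 6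
  (nd 0 5 (fc 0 4 (lf 0 2 5 1 3 4 6)) (fc 0 4 (fc 0 6 (lf 0 2 6 1 3 4 5)))) (nd 0 6 (fc 1 2 (fc 1
  4 (lf 1 2 3 0 6 4 5))) (fc 0 3 (fc 1 2 (fc 0 4 (fc 1 4 (lf 0 1 2 3 6 4 5))))))) (nd 0 5 (fc 2 6
  (fc 1 2 (fc 1 4 (lf 1 2 3 0 5 4 6)))) (fc 0 4 (fc 0 3 (fc 2 6 (fc 1 2 (fc 1 4 (lf 0 1 2 3 5 4
  6)))))))) (nd 2 5 (fc 0 3 (fc 1 2 (fc 0 4 (fc 1 6 (lf 0 2 3 1 6 4 5))))) (fc 1 5 (fc 0 4 (fc 0 3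
  (fc 2 6 (fc 1 2 (lf 0 2 3 1 5 4 6))))))))) (nd 1 5 (nd 2 5 (nd 0 4 (nd 1 4 (fc 0 3 (fc 1 3 (lf 0
  1 3 2 5 4 6))) (fc 0 3 (fc 1 2 (fc 1 3 (lf 0 1 2 3 6 4 5))))) (fc 0 3 (fc 0 6 (fc 1 3 (fc 1 4
  (lf 0 1 3 2 5 4 6)))))) (nd 2 4 (nd 1 4 (fc 0 5 (fc 1 3 (fc 5 6 (lf 1 4 5 0 2 3 6)))) (fc 0 3
  (fc 1 2 (fc 0 4 (fc 1 3 (lf 0 1 2 3 6 4 5)))))) (fc 1 3 (fc 0 4 (fc 0 3 (fc 2 6 (fc 1 2 (lf 0 2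
  3 1 5 4 6)))))))) (fc 1 3 (fc 0 5 (fc 2 5 (fc 0 3 (fc 1 2 (fc 1 4 (lf 0 1 2 3 6 4 5))))))))) (nd
  1 2 (nd 3 5 (nd 2 4 (nd 1 5 (fc 0 3 (fc 0 4 (fc 0 5 (lf 0 3 5 1 2 4 6)))) (fc 0 3 (fc 0 4 (fc 0
  6 (fc 1 6 (lf 0 3 6 1 2 4 5)))))) (fc 0 5 (fc 0 4 (fc 2 5 (fc 0 3 (fc 1 4 (lf 0 3 5 1 2 4
  6))))))) (nd 2 5 (nd 1 4 (fc 0 3 (fc 0 4 (fc 0 5 (fc 1 3 (lf 0 1 3 2 5 4 6))))) (fc 1 3 (fc 1 6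
  (fc 0 5 (fc 0 4 (fc 0 3 (lf 0 1 3 2 5 4 6))))))) (fc 1 5 (fc 5 6 (fc 2 4 (fc 0 5 (fc 0 4 (fc 0 3
  (lf 0 4 5 1 2 3 6))))))))) (fc 1 3 (fc 1 5 (fc 0 5 (fc 0 4 (fc 2 5 (fc 0 3 (fc 1 4 (lf 0 1 3 2 5
  4 6)))))))))) (nd 0 3 (nd 1 3 (nd 5 6 (nd 0 5 (nd 1 5 (fc 0 4 (fc 1 4 (fc 2 4 (lf 0 1 3 2 4 5
  6)))) (fc 0 4 (fc 1 2 (fc 2 4 (fc 1 6 (lf 0 1 3 2 4 5 6)))))) (fc 1 5 (fc 2 4 (fc 0 2 (fc 0 6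
  (fc 1 4 (lf 0 1 3 2 4 5 6))))))) (fc 1 5 (fc 2 4 (fc 0 5 (fc 0 4 (fc 2 5 (fc 1 4 (lf 0 1 3 2 5 4
  6)))))))) (nd 0 2 (fc 3 5 (fc 1 5 (fc 2 4 (fc 0 4 (fc 1 2 (fc 1 4 (lf 0 1 2 3 5 4 6))))))) (fc 1
  6 (fc 3 5 (fc 1 5 (fc 2 4 (fc 0 4 (fc 1 2 (fc 0 6 (lf 0 1 6 2 4 3 5)))))))))) (nd 1 2 (fc 1 3
  (fc 3 5 (fc 2 4 (fc 0 5 (fc 0 4 (fc 0 2 (fc 1 4 (lf 0 1 2 3 5 4 6)))))))) (fc 1 3 (fc 1 6 (fc 3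
  5 (fc 2 4 (fc 0 5 (fc 0 2 (fc 0 6 (fc 1 4 (lf 0 1 6 2 4 3 5)))))))))))) (nd 4 5 (nd 0 4 (nd 1 4
  (nd 2 5 (nd 0 2 (nd 1 2 (fc 0 3 (fc 3 5 (fc 1 3 (lf 0 1 3 2 5 4 6)))) (fc 0 3 (fc 3 5 (fc 1 3
  (fc 1 5 (lf 0 1 3 2 5 4 6)))))) (fc 1 3 (fc 3 5 (fc 0 5 (fc 0 3 (fc 1 2 (lf 0 1 3 2 5 4 6)))))))
  (fc 1 3 (fc 2 4 (fc 0 2 (fc 0 3 (fc 2 6 (fc 1 2 (lf 0 1 2 3 6 4 5)))))))) (nd 0 5 (fc 1 3 (fc 3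
  5 (fc 1 5 (fc 2 4 (fc 0 3 (fc 1 2 (lf 0 1 5 2 4 3 6))))))) (fc 1 3 (fc 1 6 (fc 3 5 (fc 2 4 (fc 0
  3 (fc 1 2 (fc 0 6 (lf 0 1 6 2 4 3 5)))))))))) (nd 1 5 (fc 1 3 (fc 3 5 (fc 2 4 (fc 0 5 (fc 0 2
  (fc 0 3 (fc 1 4 (lf 0 1 5 2 4 3 6)))))))) (fc 1 3 (fc 1 6 (fc 3 5 (fc 2 4 (fc 0 2 (fc 0 3 (fc 1
  2 (fc 0 6 (lf 0 1 6 2 4 3 5))))))))))) (nd 2 5 (nd 0 2 (nd 1 2 (fc 1 3 (fc 3 5 (fc 2 4 (fc 0 4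
  (fc 0 3 (fc 1 4 (lf 0 1 2 3 5 4 6))))))) (fc 1 3 (fc 3 5 (fc 1 5 (fc 2 4 (fc 0 4 (fc 0 3 (fc 1 4
  (lf 0 1 3 2 5 4 6))))))))) (fc 1 3 (fc 3 5 (fc 2 4 (fc 0 5 (fc 0 4 (fc 0 3 (fc 1 2 (fc 1 4 (lf 0
  1 3 2 5 4 6)))))))))) (fc 1 3 (fc 5 6 (fc 2 4 (fc 0 5 (fc 0 4 (fc 0 2 (fc 2 6 (fc 1 2 (fc 1 4
  (lf 0 2 4 1 3 5 6))))))))))))) (nd 2 4 (nd 5 6 (nd 0 4 (nd 1 6 (nd 1 2 (nd 0 6 (fc 0 3 (fc 3 5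
  (fc 2 3 (fc 1 3 (lf 0 1 3 2 4 5 6))))) (fc 1 3 (fc 3 5 (fc 0 2 (fc 0 3 (fc 2 3 (lf 0 1 2 3 5 4
  6))))))) (nd 0 6 (fc 1 3 (fc 3 5 (fc 0 3 (fc 2 3 (fc 1 4 (lf 0 1 3 2 4 5 6)))))) (fc 1 3 (fc 3 5
  (fc 0 5 (fc 0 3 (fc 2 3 (fc 1 4 (lf 0 1 3 2 4 5 6))))))))) (fc 1 3 (fc 3 5 (fc 1 5 (fc 0 3 (fc 1
  2 (fc 2 3 (fc 0 6 (lf 0 1 3 2 4 5 6))))))))) (nd 1 6 (fc 1 3 (fc 3 5 (fc 0 5 (fc 0 2 (fc 0 3 (fc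
  2 3 (fc 1 4 (lf 0 1 3 2 4 5 6)))))))) (fc 1 3 (fc 3 5 (fc 0 2 (fc 0 3 (fc 1 2 (fc 0 6 (fc 2 3
  (fc 1 4 (lf 0 1 2 3 5 4 6))))))))))) (nd 4 5 (nd 0 4 (nd 1 5 (fc 1 3 (fc 1 6 (fc 2 6 (fc 0 3 (fc
  2 3 (fc 0 6 (lf 0 1 6 2 3 4 5))))))) (fc 1 6 (fc 2 6 (fc 0 3 (fc 1 2 (fc 2 3 (fc 0 6 (fc 1 4 (lf
  0 1 6 2 3 4 5))))))))) (fc 1 3 (fc 1 6 (fc 0 5 (fc 0 2 (fc 2 6 (fc 2 3 (fc 0 6 (fc 1 4 (lf 0 1 6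
  2 3 4 5)))))))))) (fc 1 3 (fc 1 6 (fc 3 5 (fc 1 5 (fc 0 5 (fc 0 4 (fc 2 5 (fc 0 3 (fc 2 3 (lf 0
  3 5 1 6 2 4)))))))))))) (nd 2 6 (nd 0 2 (nd 1 2 (fc 1 3 (fc 3 5 (fc 0 4 (fc 4 5 (fc 0 3 (fc 2 3
  (fc 1 4 (lf 0 1 2 3 5 4 6)))))))) (fc 1 3 (fc 1 6 (fc 3 5 (fc 0 4 (fc 4 5 (fc 0 3 (fc 2 3 (fc 1
  4 (lf 0 1 3 2 6 4 5)))))))))) (fc 1 3 (fc 3 5 (fc 0 4 (fc 4 5 (fc 0 3 (fc 1 2 (fc 2 3 (fc 0 6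
  (fc 1 4 (lf 0 1 3 2 6 4 5))))))))))) (fc 1 3 (fc 3 5 (fc 5 6 (fc 2 5 (fc 0 2 (fc 0 3 (fc 1 2 (fc
  0 6 (fc 2 3 (fc 1 4 (lf 0 2 3 1 4 5 6)))))))))))))) (nd 2 3 (nd 0 3 (nd 1 6 (nd 3 5 (nd 1 3 (nd
  5 6 (nd 0 6 (fc 0 4 (fc 1 4 (fc 2 4 (fc 4 5 (lf 0 1 3 2 4 5 6))))) (fc 2 4 (fc 0 5 (fc 0 2 (fc 2
  6 (fc 1 4 (lf 0 1 3 2 4 5 6))))))) (fc 2 4 (fc 0 4 (fc 4 5 (fc 2 6 (fc 0 6 (fc 1 4 (lf 0 1 3 2 6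
  4 5)))))))) (nd 0 2 (fc 2 4 (fc 0 4 (fc 3 6 (fc 4 5 (fc 1 2 (fc 1 4 (lf 0 1 2 3 6 4 5))))))) (fc
  1 5 (fc 2 4 (fc 0 5 (fc 0 4 (fc 3 6 (fc 4 5 (fc 1 2 (lf 0 1 5 2 4 3 6)))))))))) (nd 5 6 (nd 0 6
  (fc 1 3 (fc 2 4 (fc 0 4 (fc 3 6 (fc 4 5 (fc 1 4 (lf 0 1 3 2 4 5 6))))))) (fc 1 3 (fc 2 4 (fc 0 5
  (fc 3 6 (fc 0 2 (fc 2 6 (fc 1 4 (lf 0 1 3 2 4 5 6))))))))) (fc 1 3 (fc 1 5 (fc 0 5 (fc 2 5 (fc 3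
  6 (fc 2 6 (fc 0 6 (fc 1 4 (lf 0 3 6 1 4 2 5))))))))))) (fc 1 3 (fc 1 5 (fc 5 6 (fc 2 4 (fc 0 4
  (fc 3 6 (fc 2 6 (fc 1 2 (fc 0 6 (lf 0 1 3 2 4 5 6))))))))))) (nd 1 2 (fc 1 3 (fc 3 5 (fc 2 4 (fc
  0 4 (fc 3 6 (fc 0 2 (fc 4 5 (fc 0 6 (fc 1 4 (lf 0 1 2 3 6 4 5)))))))))) (fc 1 3 (fc 3 5 (fc 1 5
  (fc 2 4 (fc 0 5 (fc 0 2 (fc 3 6 (fc 4 5 (fc 0 6 (fc 1 4 (lf 0 1 5 2 4 3 6))))))))))))) (nd 2 6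
  (nd 0 2 (nd 1 2 (fc 1 3 (fc 3 5 (fc 2 4 (fc 0 4 (fc 3 6 (fc 4 5 (fc 0 3 (fc 1 4 (lf 0 1 2 3 6 4
  5))))))))) (fc 1 3 (fc 1 6 (fc 3 5 (fc 2 4 (fc 0 4 (fc 3 6 (fc 4 5 (fc 0 3 (fc 1 4 (lf 0 1 3 2 6
  4 5))))))))))) (fc 1 3 (fc 3 5 (fc 2 4 (fc 0 4 (fc 3 6 (fc 4 5 (fc 0 3 (fc 1 2 (fc 0 6 (fc 1 4
  (lf 0 1 3 2 6 4 5)))))))))))) (fc 1 3 (fc 1 6 (fc 5 6 (fc 2 4 (fc 0 4 (fc 2 5 (fc 0 2 (fc 4 5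
  (fc 1 2 (fc 0 6 (fc 1 4 (lf 0 2 4 1 3 5 6)))))))))))))))

lemma look_setb {m i j k l : ℕ} (hi : i < 7) (hj : j < 7) (h : look (setb m i j) k l = true) :
    look m k l = true ∨ (k = i ∧ l = j) ∨ (k = j ∧ l = i) := by
  unfold look setb at *
  simp only [Bool.and_eq_true, Nat.testBit_or, Bool.or_eq_true, Nat.testBit_two_pow,
    Nat.blt_eq, decide_eq_true_eq] at *
  rcases h with ⟨hl, (h | h) | h⟩
  · exact Or.inl ⟨hl, h⟩
  · right; left; omega
  · right; right; omega

lemma tooMany_false {J : ℕ → ℕ → Bool} {T i : ℕ}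
    (hJ : ((List.range 7).filter (fun j => J i j)).length ≤ 2)
    (hT : ∀ i j, look T i j = true → J i j = true) : tooMany T i = false := by
  by_contra hc
  simp only [tooMany, Bool.not_eq_false, Nat.blt_eq] at hc
  have : ((List.range 7).filter (fun j => look T i j)).length ≤
      ((List.range 7).filter (fun j => J i j)).length := by
    apply List.Sublist.length_le
    exact List.monotone_filter_right _ (fun j hj => hT i j hj)
  omega

lemma chk_sound (A J : ℕ → ℕ → Bool)
    (hA : ∀ i j, A i j = true → A j i = true) (hJs : ∀ i j, J i j = true → J j i = true)
    (hJ : ∀ i < 7, ((List.range 7).filter (fun j => J i j)).length ≤ 2)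
    (hAJ : ∀ i < 7, ∀ j < 7, i ≠ j → A i j = true ∨ J i j = true) :
    ∀ (t : Tree) (T F : ℕ),
      (∀ i j, look T i j = true → J i j = true) →
      (∀ i j, look F i j = true → A i j = true) →
      chk t T F = true → ∃ l, wf l = true ∧ modelOK A l = true := by
  have stepF : ∀ F i j, i < 7 → j < 7 → A i j = true → (∀ i j, look F i j = true → A i j = true) →
      (∀ k l, look (setb F i j) k l = true → A k l = true) := by
    intro F i j hi hj hij hF k l h
    rcases look_setb hi hj h with h | ⟨rfl, rfl⟩ | ⟨rfl, rfl⟩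
    · exact hF _ _ h
    · exact hij
    · exact hA _ _ hij
  have stepT : ∀ F i j, i < 7 → j < 7 → J i j = true → (∀ i j, look F i j = true → J i j = true) →
      (∀ k l, look (setb F i j) k l = true → J k l = true) := by
    intro F i j hi hj hij hF k l h
    rcases look_setb hi hj h with h | ⟨rfl, rfl⟩ | ⟨rfl, rfl⟩
    · exact hF _ _ h
    · exact hij
    · exact hJs _ _ hij
  intro t
  induction t with
  | lf p q r s t u v =>
    intro T F _ hF h
    simp only [chk, Bool.and_eq_true] at h
    exact ⟨_, h.1, modelOK_mono hF _ h.2⟩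
  | fc i j t ih =>
    intro T F hT hF h
    simp only [chk, okPair, Bool.and_eq_true, Bool.or_eq_true, Nat.blt_eq] at h
    obtain ⟨⟨⟨hij, hj⟩, h2⟩, h3⟩ := h
    have hi : i < 7 := by omega
    rcases hAJ i hi j hj (by omega) with h | h
    · exact ih T _ hT (stepF F i j hi hj h hF) h3
    · have hT' := stepT T i j hi hj h hT
      rw [tooMany_false (hJ _ hi) hT', tooMany_false (hJ _ hj) hT'] at h2
      rcases h2 with h2 | h2 <;> cases h2
  | nd i j t t' ih ih' =>
    intro T F hT hF h
    simp only [chk, okPair, Bool.and_eq_true, Nat.blt_eq] at h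
    obtain ⟨⟨⟨hij, hj⟩, h2⟩, h3⟩ := h
    have hi : i < 7 := by omega
    rcases hAJ i hi j hj (by omega) with h | h
    · exact ih T _ hT (stepF F i j hi hj h hF) h2
    · exact ih' _ F (stepT T i j hi hj h hT) hF h3

lemma chk_true : chk tree (setb 0 0 1) (setb 0 0 1) = true :=
  of_decide_eq_true (inst := instDecidableEqBool _ _) (by decide +kernel)

/-- The finite statement on seven vertices. -/
lemma seven (A J : ℕ → ℕ → Prop)
    (hA : ∀ i j, A i j → A j i) (hJs : ∀ i j, J i j → J j i)
    (hJ : ∀ i < 7, ((Finset.range 7).filter (fun j => J i j)).card ≤ 2)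
    (hAJ : ∀ i < 7, ∀ j < 7, i ≠ j → A i j ∨ J i j)
    (hA01 : A 0 1) (hJ01 : J 0 1) :
    ∃ p q r s t u v : ℕ, [p, q, r, s, t, u, v].Perm (List.range 7) ∧
      A p q ∧ A p r ∧ A q r ∧ A s t ∧ A u v ∧
      (A p s ∨ A p t) ∧ (A q s ∨ A q t) ∧ (A r s ∨ A r t) ∧
      (A p u ∨ A p v) ∧ (A q u ∨ A q v) ∧ (A r u ∨ A r v) ∧
      (A s u ∨ A s v ∨ A t u ∨ A t v) := by
  have hlook : ∀ B : ℕ → ℕ → Prop, (∀ i j, B i j → B j i) → B 0 1 →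
      ∀ i j, look (setb 0 0 1) i j = true → decide (B i j) = true := by
    intro B hB h01 i j h
    rcases look_setb (by norm_num) (by norm_num) h with h | ⟨rfl, rfl⟩ | ⟨rfl, rfl⟩
    · simp [look] at h
    · simpa using h01
    · simpa using hB _ _ h01
  obtain ⟨l, hw, hm⟩ := chk_sound (fun i j => decide (A i j)) (fun i j => decide (J i j))
    (by simpa using hA) (by simpa using hJs)
    (by
      intro i hi
      refine le_trans (le_of_eq ?_) (hJ i hi)
      rw [← List.toFinset_card_of_nodup (List.nodup_range.filter _)]
      congr 1
      ext j
      simp)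
    (by simpa using hAJ) tree _ _
    (hlook J hJs hJ01) (hlook A hA hA01) chk_true
  unfold modelOK at hm
  split at hm
  · rename_i p q r s t u v
    refine ⟨p, q, r, s, t, u, v, ?_, ?_⟩
    · have hsub : List.range 7 ⊆ [p, q, r, s, t, u, v] := by
        simp only [wf] at hw
        intro i hi
        have := List.all_eq_true.1 hw i hi
        obtain ⟨j, hj, hij⟩ := List.any_eq_true.1 this
        rw [Nat.eq_of_beq_eq_true hij]; exact hj
      have := List.subperm_of_subset List.nodup_range hsub
      exact (this.perm_of_length_le (by simp)).symm
    · simp only [Bool.and_eq_true, Bool.or_eq_true, decide_eq_true_eq] at hm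
      obtain ⟨⟨⟨⟨⟨⟨⟨⟨⟨⟨⟨h1, h2⟩, h3⟩, h4⟩, h5⟩, h6⟩, h7⟩, h8⟩, h9⟩, h10⟩, h11⟩, h12⟩ := hm
      refine ⟨h1, h2, h3, h4, h5, h6, h7, h8, h9, h10, h11, ?_⟩
      rcases h12 with ((h | h) | h) | h
      · exact Or.inl h
      · exact Or.inr (Or.inl h)
      · exact Or.inr (Or.inr (Or.inl h))
      · exact Or.inr (Or.inr (Or.inr h))
  · simp at hm

/-! ### Minors -/

open SimpleGraph

lemma conn_transfer {V : Type*} {G H : SimpleGraph V} {f : V → Set V} {B : Set V}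
    (hB : (H.induce B).Connected) (hf : ∀ w ∈ B, (G.induce (f w)).Connected)
    (hadj : ∀ w ∈ B, ∀ w' ∈ B, H.Adj w w' → ∃ p ∈ f w, ∃ q ∈ f w', G.Adj p q) :
    (G.induce (⋃ w ∈ B, f w)).Connected := by
  set U := ⋃ w ∈ B, f w with hU
  have hsub : ∀ w ∈ B, f w ⊆ U := fun w hw => Set.subset_biUnion_of_mem (u := f) hw
  have hin : ∀ w (hw : w ∈ B) p (hp : p ∈ f w) q (hq : q ∈ f w),
      (G.induce U).Reachable ⟨p, hsub w hw hp⟩ ⟨q, hsub w hw hq⟩ := by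
    intro w hw p hp q hq
    have := ((hf w hw).preconnected ⟨p, hp⟩ ⟨q, hq⟩).map (G.induceHomOfLE (hsub w hw)).toHom
    exact this
  have key : ∀ (w w' : B), (H.induce B).Walk w w' → ∀ p (hp : p ∈ f w) q (hq : q ∈ f w'),
      (G.induce U).Reachable ⟨p, hsub w w.2 hp⟩ ⟨q, hsub w' w'.2 hq⟩ := by
    intro w w' W
    induction W with
    | @nil a => intro p hp q hq; exact hin a a.2 p hp q hq
    | @cons a b c h W ih =>
      intro p hp q hq
      obtain ⟨p0, hp0, q0, hq0, h0⟩ := hadj a a.2 b b.2 h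
      have h1 := hin a a.2 p hp p0 hp0
      have h2 : (G.induce U).Adj ⟨p0, hsub a a.2 hp0⟩ ⟨q0, hsub b b.2 hq0⟩ := h0
      exact (h1.trans h2.reachable).trans (ih q0 hq0 q hq)
  obtain ⟨w⟩ := hB.nonempty
  obtain ⟨p⟩ := (hf w w.2).nonempty
  have : Nonempty U := ⟨⟨p, hsub w w.2 p.2⟩⟩
  refine ⟨?_⟩
  rintro ⟨p, hp⟩ ⟨q, hq⟩
  obtain ⟨w, hw, hpw⟩ := Set.mem_iUnion₂.1 hp
  obtain ⟨w', hw', hqw⟩ := Set.mem_iUnion₂.1 hq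
  obtain ⟨W⟩ := hB.preconnected ⟨w, hw⟩ ⟨w', hw'⟩
  exact key _ _ W p hpw q hqw

lemma exists_adj_of_mem {V : Type*} {H : SimpleGraph V} {B : Set V} {w : V} (hw : w ∈ B)
    (hB : (H.induce B).Connected) (ho : ∃ u ∈ B, ∃ v, H.Adj u v) : ∃ w', H.Adj w w' := by
  by_cases h : ∃ z ∈ B, z ≠ w
  · obtain ⟨z, hz, hzw⟩ := h
    have : Nontrivial B := ⟨⟨w, hw⟩, ⟨z, hz⟩, fun h => hzw (by simpa using h.symm)⟩
    obtain ⟨w', h'⟩ := hB.preconnected.exists_adj_of_nontrivial ⟨w, hw⟩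
    exact ⟨w', h'⟩
  · push Not at h
    obtain ⟨u, hu, v, huv⟩ := ho
    rw [h u hu] at huv
    exact ⟨v, huv⟩

lemma minor_transfer {V : Type*} {G H : SimpleGraph V} (f : V → Set V)
    (hf : ∀ w w', H.Adj w w' → (G.induce (f w)).Connected)
    (hdis : ∀ w w' z z', H.Adj w z → H.Adj w' z' → w ≠ w' → Disjoint (f w) (f w'))
    (hadj : ∀ w w', H.Adj w w' → ∃ p ∈ f w, ∃ q ∈ f w', G.Adj p q)
    (hm : H.HasCompleteMinor 6) : G.HasCompleteMinor 6 := by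
  obtain ⟨B, h1, h2, h3, h4⟩ := hm
  have hn : ∀ i, ∀ w ∈ B i, ∃ w', H.Adj w w' := by
    intro i w hw
    apply exists_adj_of_mem hw (h2 i)
    obtain ⟨j, hj⟩ := exists_ne i
    obtain ⟨u, hu, v, -, huv⟩ := h4 i j hj.symm
    exact ⟨u, hu, v, huv⟩
  have hc : ∀ i, (G.induce (⋃ w ∈ B i, f w)).Connected := by
    intro i
    refine conn_transfer (h2 i) ?_ (fun w _ w' _ h => hadj w w' h)
    intro w hw
    obtain ⟨w', h⟩ := hn i w hw
    exact hf w w' h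
  refine ⟨fun i => ⋃ w ∈ B i, f w, ?_, hc, ?_, ?_⟩
  · intro i
    obtain ⟨p⟩ := (hc i).nonempty
    exact ⟨p, p.2⟩
  · intro i j hij
    simp only [Set.disjoint_iUnion_left, Set.disjoint_iUnion_right]
    intro w' hw' w hw
    obtain ⟨z, hz⟩ := hn _ _ hw
    obtain ⟨z', hz'⟩ := hn _ _ hw'
    apply hdis _ _ _ _ (by assumption) (by assumption)
    rintro rfl
    exact Set.disjoint_left.1 (h3 i j hij) (by assumption) (by assumption)
  · intro i j hij
    obtain ⟨u, hu, v, hv, huv⟩ := h4 i j hij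
    obtain ⟨p, hp, q, hq, h⟩ := hadj u v huv
    exact ⟨p, Set.mem_biUnion hu hp, q, Set.mem_biUnion hv hq, h⟩

lemma conn_single {V : Type*} (G : SimpleGraph V) (v : V) : (G.induce {v}).Connected := by
  have : Nonempty ({v} : Set V) := ⟨⟨v, rfl⟩⟩
  exact ⟨Preconnected.of_subsingleton⟩

lemma minor_mono {V : Type*} {G H : SimpleGraph V} (h : H ≤ G) (hm : H.HasCompleteMinor 6) :
    G.HasCompleteMinor 6 := by
  refine minor_transfer (fun v => {v}) (fun w _ _ => conn_single G w) ?_ ?_ hm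
  · intro w w' _ _ _ _ hne
    simpa using hne
  · intro w w' hw
    exact ⟨w, rfl, w', rfl, h hw⟩

lemma minor_of_sets {V : Type*} {G : SimpleGraph V} (B : Fin 6 → Set V)
    (hc : ∀ i, (G.induce (B i)).Connected)
    (hd : ∀ i j, i < j → Disjoint (B i) (B j))
    (ha : ∀ i j, i < j → ∃ u ∈ B i, ∃ v ∈ B j, G.Adj u v) : G.HasCompleteMinor 6 := by
  refine ⟨B, ?_, hc, ?_, ?_⟩
  · intro i
    obtain ⟨p⟩ := (hc i).nonempty
    exact ⟨p, p.2⟩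
  · intro i j hij
    rcases lt_or_gt_of_ne hij with h | h
    · exact hd i j h
    · exact (hd j i h).symm
  · intro i j hij
    rcases lt_or_gt_of_ne hij with h | h
    · exact ha i j h
    · obtain ⟨u, hu, v, hv, huv⟩ := ha j i h
      exact ⟨v, hv, u, hu, huv.symm⟩

lemma minor_of_clique {V : Type*} {G : SimpleGraph V} (S : Finset V) (hS : 6 ≤ S.card)
    (h : ∀ a ∈ S, ∀ b ∈ S, a ≠ b → G.Adj a b) : G.HasCompleteMinor 6 := by
  have e : Fin 6 ↪ S := by
    apply Classical.choice
    apply Function.Embedding.nonempty_of_card_le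
    simpa using hS
  refine minor_of_sets (fun i => {(e i : V)}) (fun i => conn_single G _) ?_ ?_
  · intro i j hij
    simpa [Subtype.ext_iff] using fun h => hij.ne (e.injective (Subtype.ext h))
  · intro i j hij
    exact ⟨_, rfl, _, rfl, h _ (e i).2 _ (e j).2 fun h => hij.ne (e.injective (Subtype.ext h))⟩

lemma minor_seven {V : Type*} {A : SimpleGraph V} {x p q r s t u v : V}
    (hx : ∀ w ∈ [p, q, r, s, t, u, v], A.Adj x w)
    (hnd : [p, q, r, s, t, u, v].Nodup)
    (h1 : A.Adj p q) (h2 : A.Adj p r) (h3 : A.Adj q r) (h4 : A.Adj s t) (h5 : A.Adj u v)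
    (h6 : A.Adj p s ∨ A.Adj p t) (h7 : A.Adj q s ∨ A.Adj q t) (h8 : A.Adj r s ∨ A.Adj r t)
    (h9 : A.Adj p u ∨ A.Adj p v) (h10 : A.Adj q u ∨ A.Adj q v) (h11 : A.Adj r u ∨ A.Adj r v)
    (h12 : A.Adj s u ∨ A.Adj s v ∨ A.Adj t u ∨ A.Adj t v) : A.HasCompleteMinor 6 := by
  have hxn : ∀ w ∈ [p, q, r, s, t, u, v], x ≠ w := fun w hw => (hx w hw).ne
  simp only [List.mem_cons, List.not_mem_nil, or_false, forall_eq_or_imp, forall_eq] at hx hxn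
  simp only [List.nodup_cons, List.mem_cons, List.not_mem_nil, or_false, not_or] at hnd
  refine minor_of_sets ![{x}, {p}, {q}, {r}, {s, t}, {u, v}] ?_ ?_ ?_
  · intro i
    fin_cases i
    · exact conn_single _ _
    · exact conn_single _ _
    · exact conn_single _ _
    · exact conn_single _ _
    · exact induce_pair_connected_of_adj h4
    · exact induce_pair_connected_of_adj h5
  · intro i j hij
    fin_cases i <;> fin_cases j <;> first | (exact absurd hij (by decide)) | skip
    all_goals
      clear hij
      rw [Set.disjoint_left]
      simp
      grind
  · intro i j hij
    fin_cases i <;> fin_cases j <;> first | (exact absurd hij (by decide)) | skip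
    all_goals
      clear hij
      simp
      grind

lemma minor_six {V : Type*} {A : SimpleGraph V} {x p q r s u v : V}
    (hx : ∀ w ∈ [p, q, r, s, u, v], A.Adj x w)
    (hnd : [p, q, r, s, u, v].Nodup)
    (h1 : A.Adj p q) (h2 : A.Adj p r) (h3 : A.Adj q r) (h4 : A.Adj p s) (h4' : A.Adj q s)
    (h4'' : A.Adj r s) (h5 : A.Adj u v)
    (h9 : A.Adj p u ∨ A.Adj p v) (h10 : A.Adj q u ∨ A.Adj q v) (h11 : A.Adj r u ∨ A.Adj r v)
    (h12 : A.Adj s u ∨ A.Adj s v) : A.HasCompleteMinor 6 := by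
  have hxn : ∀ w ∈ [p, q, r, s, u, v], x ≠ w := fun w hw => (hx w hw).ne
  simp only [List.mem_cons, List.not_mem_nil, or_false, forall_eq_or_imp, forall_eq] at hx hxn
  simp only [List.nodup_cons, List.mem_cons, List.not_mem_nil, or_false, not_or] at hnd
  refine minor_of_sets ![{x}, {p}, {q}, {r}, {s}, {u, v}] ?_ ?_ ?_
  · intro i
    fin_cases i
    · exact conn_single _ _
    · exact conn_single _ _
    · exact conn_single _ _
    · exact conn_single _ _
    · exact conn_single _ _
    · exact induce_pair_connected_of_adj h5
  · intro i j hij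
    fin_cases i <;> fin_cases j <;> first | (exact absurd hij (by decide)) | skip
    all_goals
      clear hij
      rw [Set.disjoint_left]
      simp
      grind
  · intro i j hij
    fin_cases i <;> fin_cases j <;> first | (exact absurd hij (by decide)) | skip
    all_goals
      clear hij
      simp
      grind

lemma nonadj_le {V : Type*} {H : SimpleGraph V} {N : Finset V} {w : V} (hw : w ∈ N)
    (hdeg : 4 ≤ (N.filter (fun z => H.Adj w z)).card) :
    (N.filter (fun z => z ≠ w ∧ ¬ H.Adj w z)).card + 5 ≤ N.card := by
  have h1 : N.filter (fun z => ¬ H.Adj w z) =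
      insert w (N.filter (fun z => z ≠ w ∧ ¬ H.Adj w z)) := by
    ext z
    simp only [Finset.mem_filter, Finset.mem_insert]
    by_cases hz : z = w
    · subst hz; simp [hw]
    · simp [hz]
  have h2 := Finset.card_filter_add_card_filter_not (s := N) (fun z => H.Adj w z)
  rw [h1, Finset.card_insert_of_notMem (by simp)] at h2
  omega

lemma cone_seven {V : Type*} {H H' : SimpleGraph V} {N : Finset V} (hN : N.card = 7) {x a b : V}
    (ha : a ∈ N) (hb : b ∈ N) (hab : a ≠ b) (hnab : ¬ H.Adj a b)
    (hdeg : ∀ w ∈ N, 4 ≤ (N.filter (fun z => H.Adj w z)).card)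
    (hH : ∀ w ∈ N, ∀ z ∈ N, H.Adj w z → H'.Adj w z) (hH'ab : H'.Adj a b)
    (hx : ∀ w ∈ N, H'.Adj x w) : H'.HasCompleteMinor 6 := by
  set L : List V := a :: b :: ((N.erase a).erase b).toList with hL
  have hLnd : L.Nodup := by
    simp only [hL, List.nodup_cons, List.mem_cons, Finset.mem_toList, Finset.mem_erase]
    exact ⟨by tauto, by tauto, Finset.nodup_toList _⟩
  have hLmem : ∀ w, w ∈ L ↔ w ∈ N := by
    intro w
    simp only [hL, List.mem_cons, Finset.mem_toList, Finset.mem_erase]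
    constructor
    · rintro (rfl | rfl | h)
      · exact ha
      · exact hb
      · exact h.2.2
    · tauto
  have hLlen : L.length = 7 := by
    rw [← List.toFinset_card_of_nodup hLnd, ← hN]
    congr 1
    ext w
    simp [hLmem]
  let e : ℕ → V := fun i => L.getD i a
  have he0 : e 0 = a := rfl
  have he1 : e 1 = b := rfl
  have heq : ∀ i (hi : i < 7), e i = L[i]'(by omega) := by
    intro i hi
    exact List.getD_eq_getElem _ _ (by omega)
  have hmem : ∀ i < 7, e i ∈ N := by
    intro i hi
    rw [heq i hi, ← hLmem]
    exact List.getElem_mem _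
  have hinj : ∀ i < 7, ∀ j < 7, e i = e j → i = j := by
    intro i hi j hj h
    rw [heq i hi, heq j hj] at h
    exact (hLnd.getElem_inj_iff).1 h
  obtain ⟨p, q, r, s, t, u, v, hperm, h1, h2, h3, h4, h5, h6, h7, h8, h9, h10, h11, h12⟩ :=
    seven (fun i j => H'.Adj (e i) (e j))
      (fun i j => i < 7 ∧ j < 7 ∧ i ≠ j ∧ ¬ H.Adj (e i) (e j))
      (fun i j h => h.symm) (fun i j h => ⟨h.2.1, h.1, h.2.2.1.symm, fun h' => h.2.2.2 h'.symm⟩)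
      (by
        intro i hi
        have hle := nonadj_le (hmem i hi) (hdeg _ (hmem i hi))
        have : ((Finset.range 7).filter
            (fun j => i < 7 ∧ j < 7 ∧ i ≠ j ∧ ¬ H.Adj (e i) (e j))).card ≤
            (N.filter (fun z => z ≠ e i ∧ ¬ H.Adj (e i) z)).card := by
          apply Finset.card_le_card_of_injOn e
          · intro j hj
            simp only [Finset.coe_filter, Finset.mem_range, Set.mem_ofPred_eq] at hj ⊢
            exact ⟨hmem j hj.1, fun h => hj.2.2.2.1 (hinj j hj.1 i hi h).symm, hj.2.2.2.2⟩
          · intro j hj k hk h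
            simp only [Finset.coe_filter, Finset.mem_range, Set.mem_ofPred_eq] at hj hk
            exact hinj j hj.1 k hk.1 h
        refine le_trans (le_of_eq ?_) (this.trans (by omega))
        congr!)
      (by
        intro i hi j hj hij
        by_cases h : H.Adj (e i) (e j)
        · exact Or.inl (hH _ (hmem i hi) _ (hmem j hj) h)
        · exact Or.inr ⟨hi, hj, hij, h⟩)
      (by simpa [he0, he1] using hH'ab)
      (by simpa [he0, he1] using hnab)
  have hlt : ∀ i ∈ [p, q, r, s, t, u, v], i < 7 := by
    intro i hi
    simpa using (hperm.mem_iff).1 hi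
  have hnd : ([p, q, r, s, t, u, v].map e).Nodup := by
    apply List.Nodup.map_on
    · intro i hi j hj h
      exact hinj i (hlt i hi) j (hlt j hj) h
    · exact hperm.nodup_iff.2 List.nodup_range
  refine minor_seven (x := x) ?_ hnd h1 h2 h3 h4 h5 h6 h7 h8 h9 h10 h11 h12
  intro w hw
  obtain ⟨i, hi, rfl⟩ := List.mem_map.1 (show w ∈ [p, q, r, s, t, u, v].map e from hw)
  exact hx _ (hmem i (hlt i hi))

lemma cone_six {V : Type*} {H H' : SimpleGraph V} {N : Finset V} (hN : N.card = 6) {x a b : V}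
    (ha : a ∈ N) (hb : b ∈ N) (hab : a ≠ b) (hnab : ¬ H.Adj a b)
    (hdeg : ∀ w ∈ N, 4 ≤ (N.filter (fun z => H.Adj w z)).card)
    (hH : ∀ w ∈ N, ∀ z ∈ N, H.Adj w z → H'.Adj w z) (hH'ab : H'.Adj a b)
    (hx : ∀ w ∈ N, H'.Adj x w) : H'.HasCompleteMinor 6 := by
  have key : ∀ w ∈ N, ∀ y ∈ N, ∀ z ∈ N, y ≠ w → z ≠ w → y ≠ z → H'.Adj w y ∨ H'.Adj w z := by
    intro w hw y hy z hz hyw hzw hyz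
    by_contra hc
    push Not at hc
    have hle := nonadj_le hw (hdeg _ hw)
    have h1 : (N.filter (fun z => z ≠ w ∧ ¬ H.Adj w z)).card ≤ 1 := by omega
    apply hyz
    apply Finset.card_le_one.1 h1
    · simp only [Finset.mem_filter]
      exact ⟨hy, hyw, fun h => hc.1 (hH _ hw _ hy h)⟩
    · simp only [Finset.mem_filter]
      exact ⟨hz, hzw, fun h => hc.2 (hH _ hw _ hz h)⟩
  have key2 : ∀ w ∈ N, ∀ y ∈ N, ∀ z ∈ N, y ≠ w → z ≠ w → y ≠ z → ¬ H.Adj w y → H'.Adj w z := by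
    intro w hw y hy z hz hyw hzw hyz hny
    by_contra hc
    have hle := nonadj_le hw (hdeg _ hw)
    have h1 : (N.filter (fun z => z ≠ w ∧ ¬ H.Adj w z)).card ≤ 1 := by omega
    apply hyz
    apply Finset.card_le_one.1 h1
    · simp only [Finset.mem_filter]
      exact ⟨hy, hyw, hny⟩
    · simp only [Finset.mem_filter]
      exact ⟨hz, hzw, fun h => hc (hH _ hw _ hz h)⟩
  have hcard : ((N.erase a).erase b).card = 4 := by
    rw [Finset.card_erase_of_mem (by simp [hb, hab.symm]), Finset.card_erase_of_mem ha, hN]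
  obtain ⟨c, d, e, f, hcd, hce, hcf, hde, hdf, hef, hM⟩ := Finset.card_eq_four.1 hcard
  have hm : ∀ w ∈ [c, d, e, f], w ∈ N ∧ w ≠ a ∧ w ≠ b := by
    intro w hw
    have : w ∈ (N.erase a).erase b := by rw [hM]; simpa using hw
    simp only [Finset.mem_erase] at this
    tauto
  simp only [List.mem_cons, List.not_mem_nil, or_false, forall_eq_or_imp, forall_eq] at hm
  obtain ⟨⟨hc, hca, hcb⟩, ⟨hd, hda, hdb⟩, ⟨he, hea, heb⟩, hf, hfa, hfb⟩ := hm
  have hnba : ¬ H.Adj b a := fun h => hnab h.symm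
  have fin : ∀ c d e f, c ∈ N → d ∈ N → e ∈ N → f ∈ N → c ≠ a → c ≠ b → d ≠ a → d ≠ b → e ≠ a →
      e ≠ b → f ≠ a → f ≠ b → c ≠ d → c ≠ e → c ≠ f → d ≠ e → d ≠ f → e ≠ f →
      H'.Adj c d → H'.Adj e f → H'.HasCompleteMinor 6 := by
    intro c d e f hc hd he hf hca hcb hda hdb hea heb hfa hfb hcd hce hcf hde hdf hef h1 h2
    have hA : ∀ z ∈ N, z ≠ a → z ≠ b → H'.Adj a z := fun z hz h1 h2 =>
      key2 a ha b hb z hz hab.symm h1 h2.symm hnab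
    have hB : ∀ z ∈ N, z ≠ a → z ≠ b → H'.Adj b z := fun z hz h1 h2 =>
      key2 b hb a ha z hz hab h2 h1.symm hnba
    refine minor_six (x := x) (p := a) (q := b) (r := c) (s := d) (u := e) (v := f) ?_ ?_ hH'ab
      (hA c hc hca hcb) (hB c hc hca hcb) (hA d hd hda hdb) (hB d hd hda hdb) h1 h2
      (Or.inl (hA e he hea heb)) (Or.inl (hB e he hea heb))
      (key c hc e he f hf hce.symm hcf.symm hef) (key d hd e he f hf hde.symm hdf.symm hef)
    · simp only [List.mem_cons, List.not_mem_nil, or_false, forall_eq_or_imp, forall_eq]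
      exact ⟨hx _ ha, hx _ hb, hx _ hc, hx _ hd, hx _ he, hx _ hf⟩
    · simp only [List.nodup_cons, List.mem_cons, List.not_mem_nil, or_false, not_or,
        List.nodup_nil]
      clear hA hB key key2 hx hH hdeg
      grind
  by_cases h1 : H'.Adj c d ∧ H'.Adj e f
  · exact fin c d e f hc hd he hf hca hcb hda hdb hea heb hfa hfb hcd hce hcf hde hdf hef h1.1 h1.2
  · have h2 : H'.Adj c e ∧ H'.Adj d f := by
      have k1 := key c hc d hd e he hcd.symm hce.symm hde
      have k2 := key d hd c hc f hf hcd hdf.symm hcf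
      have k3 := key e he c hc f hf hce hef.symm hcf
      have k4 := key f hf d hd e he hdf hef hde
      simp only [H'.adj_comm d c, H'.adj_comm e c, H'.adj_comm f d, H'.adj_comm f e] at k1 k2 k3 k4
      tauto
    exact fin c e d f hc he hd hf hca hcb hea heb hda hdb hfa hfb hce hcd hcf hde.symm hef hdf
      h2.1 h2.2

/-! ### Counting -/

/-- contraction of the edge `uv` onto `u`; the vertex `v` becomes isolated -/
def contract {V : Type*} (G : SimpleGraph V) (u v : V) : SimpleGraph V where
  Adj a b := a ≠ b ∧ a ≠ v ∧ b ≠ v ∧ (G.Adj a b ∨ (a = u ∧ G.Adj v b) ∨ (b = u ∧ G.Adj v a))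
  symm := ⟨by
    rintro a b ⟨h1, h2, h3, h4⟩
    exact ⟨h1.symm, h3, h2, h4.imp (fun h => h.symm) (fun h => h.symm)⟩⟩
  loopless := ⟨fun a h => h.1 rfl⟩

/-- restriction of a graph to a vertex set -/
def restr {V : Type*} (G : SimpleGraph V) (Y : Finset V) : SimpleGraph V where
  Adj a b := G.Adj a b ∧ a ∈ Y ∧ b ∈ Y
  symm := ⟨fun _ _ h => ⟨h.1.symm, h.2.2, h.2.1⟩⟩
  loopless := ⟨fun a h => G.loopless.irrefl a h.1⟩

lemma restr_le {V : Type*} (G : SimpleGraph V) (Y : Finset V) : restr G Y ≤ G := fun _ _ h => h.1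

lemma contract_minor {V : Type*} {G : SimpleGraph V} {u v : V} (huv : G.Adj u v)
    (hm : (contract G u v).HasCompleteMinor 6) : G.HasCompleteMinor 6 := by
  refine minor_transfer (fun w => if w = u then {u, v} else {w}) ?_ ?_ ?_ hm
  · intro w w' _
    by_cases h : w = u
    · rw [if_pos h]
      exact induce_pair_connected_of_adj huv
    · rw [if_neg h]
      exact conn_single G w
  · rintro w w' z z' ⟨-, hw, -⟩ ⟨-, hw', -⟩ hne
    rw [Set.disjoint_left]
    by_cases h : w = u
    · have h' : w' ≠ u := fun h' => hne (h.trans h'.symm)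
      simp only [h, h', if_true, if_false]
      subst h
      simp [hne, hw'.symm]
    · by_cases h' : w' = u
      · simp only [h, h', if_true, if_false]
        simp [h, hw]
      · simp only [h, h', if_false]
        simpa using hne
  · rintro w w' ⟨h1, h2, h3, h4 | ⟨rfl, h4⟩ | ⟨rfl, h4⟩⟩
    · refine ⟨w, ?_, w', ?_, h4⟩
      · by_cases h : w = u <;> simp [h]
      · by_cases h : w' = u <;> simp [h]
    · refine ⟨v, by simp, w', ?_, h4⟩
      simp [h1.symm]
    · refine ⟨w, ?_, v, by simp, h4.symm⟩
      simp [h1]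

lemma contract_count {V : Type*} [Fintype V] {G : SimpleGraph V} {u v : V} (huv : G.Adj u v) :
    G.edgeFinset.card ≤ (contract G u v).edgeFinset.card + 1 +
      (Finset.univ.filter (fun w => G.Adj u w ∧ G.Adj v w)).card := by
  set R := Finset.univ.filter (fun w => G.Adj v w ∧ w ≠ u ∧ ¬ G.Adj u w) with hR
  set K := Finset.univ.filter (fun w => G.Adj u w ∧ G.Adj v w) with hK
  have hdeg : (G.incidenceFinset v).card ≤ 1 + K.card + R.card := by
    rw [card_incidenceFinset_eq_degree, ← card_neighborFinset_eq_degree]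
    have : G.neighborFinset v ⊆ ({u} ∪ K) ∪ R := by
      intro w hw
      simp only [mem_neighborFinset] at hw
      simp only [hK, hR, Finset.mem_union, Finset.mem_singleton, Finset.mem_filter,
        Finset.mem_univ, true_and]
      tauto
    refine (Finset.card_le_card this).trans ((Finset.card_union_le _ _).trans ?_)
    have := Finset.card_union_le {u} K
    simp only [Finset.card_singleton] at this
    omega
  have hsub : (G.edgeFinset \ G.incidenceFinset v) ∪ R.image (fun w => s(u, w)) ⊆
      (contract G u v).edgeFinset := by
    intro e he
    induction e using Sym2.ind with
    | _ a b =>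
    simp only [Finset.mem_union, Finset.mem_sdiff, mem_edgeFinset, mem_edgeSet, Finset.mem_image,
      mem_incidenceFinset, mk'_mem_incidenceSet_iff] at he
    rw [mem_edgeFinset, mem_edgeSet]
    rcases he with ⟨h1, h2⟩ | ⟨w, hw, h⟩
    · refine ⟨h1.ne, ?_, ?_, Or.inl h1⟩
      · rintro rfl; exact h2 ⟨h1, Or.inl rfl⟩
      · rintro rfl; exact h2 ⟨h1, Or.inr rfl⟩
    · simp only [hR, Finset.mem_filter, Finset.mem_univ, true_and] at hw
      rw [← mem_edgeSet, ← h, mem_edgeSet]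
      exact ⟨hw.2.1.symm, huv.ne, hw.1.ne.symm, Or.inr (Or.inl ⟨rfl, hw.1⟩)⟩
  have hdisj : Disjoint (G.edgeFinset \ G.incidenceFinset v) (R.image (fun w => s(u, w))) := by
    rw [Finset.disjoint_left]
    intro e he h
    obtain ⟨w, hw, rfl⟩ := Finset.mem_image.1 h
    simp only [hR, Finset.mem_filter, Finset.mem_univ, true_and] at hw
    simp only [Finset.mem_sdiff, mem_edgeFinset, mem_edgeSet] at he
    exact hw.2.2 he.1
  have hRi : (R.image (fun w => s(u, w))).card = R.card := by
    apply Finset.card_image_of_injective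
    intro a b h
    simp only [Sym2.eq_iff, true_and] at h
    rcases h with h | ⟨h, h'⟩
    · exact h
    · exact h'.trans h
  have h1 := Finset.card_le_card hsub
  rw [Finset.card_union_of_disjoint hdisj, hRi,
    Finset.card_sdiff_of_subset (G.incidenceFinset_subset v)] at h1
  omega

lemma delete_count {V : Type*} [Fintype V] {G : SimpleGraph V} {X : Finset V}
    (hX : ∀ a b, G.Adj a b → a ∈ X) (v : V) :
    G.edgeFinset.card ≤ (restr G (X.erase v)).edgeFinset.card + G.degree v := by
  have hsub : G.edgeFinset \ G.incidenceFinset v ⊆ (restr G (X.erase v)).edgeFinset := by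
    intro e he
    induction e using Sym2.ind with
    | _ a b =>
    simp only [Finset.mem_sdiff, mem_edgeFinset, mem_edgeSet,
      mem_incidenceFinset, mk'_mem_incidenceSet_iff] at he
    rw [mem_edgeFinset, mem_edgeSet]
    obtain ⟨h1, h2⟩ := he
    refine ⟨h1, Finset.mem_erase.2 ⟨?_, hX _ _ h1⟩, Finset.mem_erase.2 ⟨?_, hX _ _ h1.symm⟩⟩
    · rintro rfl; exact h2 ⟨h1, Or.inl rfl⟩
    · rintro rfl; exact h2 ⟨h1, Or.inr rfl⟩
  have h1 := Finset.card_le_card hsub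
  rw [Finset.card_sdiff_of_subset (G.incidenceFinset_subset v), card_incidenceFinset_eq_degree] at h1
  omega

lemma sep_count {V : Type*} [Fintype V] {G : SimpleGraph V} {A B : Finset V}
    (hAB : ∀ a b, G.Adj a b → (a ∈ A ∧ b ∈ A) ∨ (a ∈ B ∧ b ∈ B))
    (hS : ∀ a ∈ A ∩ B, ∀ b ∈ A ∩ B, a ≠ b → G.Adj a b) :
    G.edgeFinset.card + (A ∩ B).card.choose 2 ≤
      (restr G A).edgeFinset.card + (restr G B).edgeFinset.card := by
  rw [← Finset.card_union_add_card_inter]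
  refine Nat.add_le_add (Finset.card_le_card ?_) ?_
  · intro e he
    induction e using Sym2.ind with
    | _ a b =>
    rw [mem_edgeFinset, mem_edgeSet] at he
    rw [Finset.mem_union, mem_edgeFinset, mem_edgeSet, mem_edgeFinset, mem_edgeSet]
    exact (hAB a b he).imp (fun h => ⟨he, h⟩) (fun h => ⟨he, h⟩)
  · rw [← Sym2.card_image_offDiag]
    apply Finset.card_le_card
    intro e he
    obtain ⟨⟨a, b⟩, hab, rfl⟩ := Finset.mem_image.1 he
    obtain ⟨ha, hb, hne⟩ := Finset.mem_offDiag.1 hab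
    have hadj := hS a ha b hb hne
    simp only [Finset.mem_inter] at ha hb
    change s(a, b) ∈ _
    rw [Finset.mem_inter, mem_edgeFinset, mem_edgeSet, mem_edgeFinset, mem_edgeSet]
    exact ⟨⟨hadj, ha.1, hb.1⟩, ⟨hadj, ha.2, hb.2⟩⟩

/-! ### The main induction -/

/-- The case of non-adjacent `a, b ∈ N(x)` joined through a connected set outside `N[x]`. -/
lemma local_minor {V : Type*} [Fintype V] {G : SimpleGraph V} {x a b : V} {C : Set V}
    (h67 : G.degree x = 6 ∨ G.degree x = 7)
    (htri : ∀ w, G.Adj x w → 4 ≤ (Finset.univ.filter (fun z => G.Adj x z ∧ G.Adj w z)).card)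
    (ha : G.Adj x a) (hb : G.Adj x b) (hab : a ≠ b) (hnab : ¬ G.Adj a b)
    (hC : (G.induce C).Connected) (hCx : ∀ z ∈ C, z ≠ x ∧ ¬ G.Adj x z)
    (haC : ∃ z ∈ C, G.Adj a z) (hbC : ∃ z ∈ C, G.Adj b z) : G.HasCompleteMinor 6 := by
  let N := G.neighborFinset x
  let H' : SimpleGraph V :=
    { Adj := fun p q => (p = x ∨ G.Adj x p) ∧ (q = x ∨ G.Adj x q) ∧
        (G.Adj p q ∨ (p = a ∧ q = b) ∨ (p = b ∧ q = a))
      symm := ⟨by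
        rintro p q ⟨h1, h2, h3⟩
        exact ⟨h2, h1, h3.imp (fun h => h.symm) (fun h => by tauto)⟩⟩
      loopless := ⟨by
        rintro p ⟨-, -, h | ⟨rfl, h⟩ | ⟨rfl, h⟩⟩
        · exact G.loopless.irrefl p h
        · exact hab h
        · exact hab h.symm⟩ }
  have hm : H'.HasCompleteMinor 6 := by
    have hNa : a ∈ N := by simpa [N] using ha
    have hNb : b ∈ N := by simpa [N] using hb
    have hdeg : ∀ w ∈ N, 4 ≤ (N.filter (fun z => G.Adj w z)).card := by
      intro w hw
      convert htri w (by simpa [N] using hw) using 2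
      ext z
      simp [N]
    have hH : ∀ w ∈ N, ∀ z ∈ N, G.Adj w z → H'.Adj w z := by
      intro w hw z hz h
      simp only [N, mem_neighborFinset] at hw hz
      exact ⟨Or.inr hw, Or.inr hz, Or.inl h⟩
    have hH'ab : H'.Adj a b := ⟨Or.inr ha, Or.inr hb, Or.inr (Or.inl ⟨rfl, rfl⟩)⟩
    have hx : ∀ w ∈ N, H'.Adj x w := by
      intro w hw
      simp only [N, mem_neighborFinset] at hw
      exact ⟨Or.inl rfl, Or.inr hw, Or.inl hw⟩
    rcases h67 with h | h
    · exact cone_six (N := N) h hNa hNb hab hnab hdeg hH hH'ab hx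
    · exact cone_seven (N := N) h hNa hNb hab hnab hdeg hH hH'ab hx
  have hoff : ∀ p, (p = x ∨ G.Adj x p) → p ∉ C := by
    rintro p (rfl | h) hp
    · exact (hCx p hp).1 rfl
    · exact (hCx p hp).2 h
  refine minor_transfer (fun w => if w = a then {a} ∪ C else {w}) ?_ ?_ ?_ hm
  · intro w w' _
    by_cases h : w = a
    · rw [if_pos h]
      obtain ⟨z, hz, haz⟩ := haC
      exact connected_induce_union (conn_single G a).preconnected hC.preconnected rfl hz haz
    · rw [if_neg h]
      exact conn_single G w
  · rintro w w' z z' ⟨hw, -, -⟩ ⟨hw', -, -⟩ hne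
    rw [Set.disjoint_left]
    by_cases h : w = a
    · have h' : w' ≠ a := fun h' => hne (h.trans h'.symm)
      simp only [h, h', if_true, if_false]
      rintro p (hp | hp) hp'
      · exact h' (hp'.symm.trans hp)
      · rw [Set.mem_singleton_iff] at hp'
        exact hoff w' hw' (hp' ▸ hp)
    · by_cases h' : w' = a
      · simp only [h, h', if_true, if_false]
        rintro p hp (hp' | hp')
        · exact h (hp.symm.trans hp')
        · rw [Set.mem_singleton_iff] at hp
          exact hoff w hw (hp ▸ hp')
      · simp only [h, h', if_false]
        simpa using hne
  · have hself : ∀ w, w ∈ (if w = a then {a} ∪ C else {w} : Set V) := by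
      intro w
      by_cases h : w = a <;> simp [h]
    rintro w w' ⟨h1, h2, h4 | ⟨rfl, rfl⟩ | ⟨rfl, rfl⟩⟩
    · exact ⟨w, hself w, w', hself w', h4⟩
    · obtain ⟨z, hz, h⟩ := hbC
      refine ⟨z, by simp [hz], w', hself w', h.symm⟩
    · obtain ⟨z, hz, h⟩ := hbC
      refine ⟨w, hself w, z, by simp [hz], h⟩

/-- The main statement, for graphs supported on a vertex set `X`. -/
lemma main {V : Type*} [Fintype V] : ∀ (n : ℕ) (X : Finset V) (G : SimpleGraph V), X.card = n →
    5 ≤ n → (∀ a b, G.Adj a b → a ∈ X) → 4 * n ≤ G.edgeFinset.card + 9 →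
    G.HasCompleteMinor 6 := by
  intro n
  induction n using Nat.strong_induction_on with
  | _ n ih =>
  intro X G0 hXn hn hX0 hE0
  -- pass to a spanning subgraph with exactly `4n - 9` edges
  obtain ⟨s, hs, hscard⟩ := Finset.exists_subset_card_eq
    (show 4 * n - 9 ≤ G0.edgeFinset.card by omega)
  have gen : ∀ (K : SimpleGraph V) (e : Sym2 V), e ∈ K.edgeFinset ↔ e ∈ K.edgeSet :=
    fun K e => mem_edgeFinset
  obtain ⟨G, hGle, hE⟩ : ∃ G : SimpleGraph V, G ≤ G0 ∧ G.edgeFinset.card = 4 * n - 9 := by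
    refine ⟨fromEdgeSet (s : Set (Sym2 V)), ?_, ?_⟩
    · intro a b h
      rw [fromEdgeSet_adj] at h
      have := hs h.1
      rwa [mem_edgeFinset, mem_edgeSet] at this
    · rw [← hscard]
      congr 1
      ext e
      rw [gen, edgeSet_fromEdgeSet]
      simp only [Set.mem_sdiff, Finset.mem_coe]
      constructor
      · exact fun h => h.1
      · intro h
        refine ⟨h, ?_⟩
        have := hs h
        rw [mem_edgeFinset] at this
        exact fun hd => G0.not_isDiag_of_mem_edgeSet this (by simpa using hd)
  apply minor_mono hGle
  have hX : ∀ a b, G.Adj a b → a ∈ X := fun a b h => hX0 a b (hGle h)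
  clear hs hscard s hE0 hX0 hGle G0
  by_contra hno
  -- the case `n = 5`
  have hn6 : 6 ≤ n := by
    by_contra h
    have hn5 : n = 5 := by omega
    have hsub : G.edgeFinset ⊆ X.offDiag.image Sym2.mk.uncurry := by
      intro e he
      induction e using Sym2.ind with
      | _ a b =>
      rw [mem_edgeFinset, mem_edgeSet] at he
      exact Finset.mem_image.2 ⟨(a, b), Finset.mem_offDiag.2 ⟨hX _ _ he, hX _ _ he.symm, he.ne⟩, rfl⟩
    have h1 := Finset.card_le_card hsub
    have h2 : (X.offDiag.image Sym2.mk.uncurry).card = X.card.choose 2 := Sym2.card_image_offDiag X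
    rw [h2, hXn, hE, hn5] at h1
    exact absurd h1 (by norm_num [Nat.choose])
  -- smaller restrictions have few edges
  have hrestr : ∀ Y : Finset V, Y.card < n → 5 ≤ Y.card →
      (restr G Y).edgeFinset.card + 10 ≤ 4 * Y.card := by
    intro Y hY hY5
    by_contra h
    exact hno (minor_mono (restr_le G Y)
      (ih Y.card hY Y _ rfl hY5 (fun a b h => h.2.1) (by omega)))
  -- minimum degree
  have hmin : ∀ v ∈ X, 5 ≤ G.degree v := by
    intro v hv
    have h1 := delete_count hX v
    have hc : (X.erase v).card = n - 1 := by rw [Finset.card_erase_of_mem hv, hXn]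
    have h2 := hrestr (X.erase v) (by omega) (by omega)
    omega
  -- triangles
  have htri : ∀ u w, G.Adj u w →
      4 ≤ (Finset.univ.filter (fun z => G.Adj u z ∧ G.Adj w z)).card := by
    intro u v huv
    by_contra h
    have h1 := contract_count huv
    have hv : v ∈ X := hX _ _ huv.symm
    have hc : (X.erase v).card = n - 1 := by rw [Finset.card_erase_of_mem hv, hXn]
    refine hno (contract_minor huv (ih (n - 1) (by omega) (X.erase v) _ hc (by omega) ?_ (by omega)))
    rintro a b ⟨-, h2, -, h4 | ⟨rfl, h4⟩ | ⟨rfl, h4⟩⟩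
    · exact Finset.mem_erase.2 ⟨h2, hX _ _ h4⟩
    · exact Finset.mem_erase.2 ⟨h2, hX _ _ huv⟩
    · exact Finset.mem_erase.2 ⟨h2, hX _ _ h4.symm⟩
  -- a vertex of minimum degree
  obtain ⟨x, hxX, hxmin⟩ := X.exists_min_image (fun v => G.degree v) (Finset.card_pos.1 (by omega))
  have hx7 : G.degree x ≤ 7 := by
    by_contra h
    have h1 := G.sum_degrees_eq_twice_card_edges
    have h2 : ∑ v ∈ X, G.degree v ≤ ∑ v, G.degree v :=
      Finset.sum_le_sum_of_subset (Finset.subset_univ X)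
    have h3 : ∑ v ∈ X, 8 ≤ ∑ v ∈ X, G.degree v :=
      Finset.sum_le_sum fun v hv => by have := hxmin v hv; omega
    simp only [Finset.sum_const, hXn, smul_eq_mul] at h3
    omega
  have hx5 := hmin x hxX
  have hNcard : (G.neighborFinset x).card = G.degree x := G.card_neighborFinset_eq_degree x
  -- neighbourhoods contain no large clique
  have hcl : ∀ S : Finset V, (∀ a ∈ S, G.Adj x a) → (∀ a ∈ S, ∀ b ∈ S, a ≠ b → G.Adj a b) →
      S.card ≤ 4 := by
    intro S hS1 hS2
    by_contra h
    have hxS : x ∉ S := fun h => G.loopless.irrefl x (hS1 x h)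
    refine hno (minor_of_clique (insert x S) (by rw [Finset.card_insert_of_notMem hxS]; omega) ?_)
    intro a ha b hb hab
    rw [Finset.mem_insert] at ha hb
    rcases ha with rfl | ha <;> rcases hb with rfl | hb
    · exact absurd rfl hab
    · exact hS1 b hb
    · exact (hS1 a ha).symm
    · exact hS2 a ha b hb hab
  -- a non-adjacent pair in the neighbourhood
  have hpair : ∃ a b, G.Adj x a ∧ G.Adj x b ∧ a ≠ b ∧ ¬ G.Adj a b := by
    by_contra h
    push Not at h
    have := hcl (G.neighborFinset x) (by simp)
      (fun a ha b hb hab => h a b (by simpa using ha) (by simpa using hb) hab)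
    omega
  obtain ⟨a0, b0, ha0, hb0, hab0, hnab0⟩ := hpair
  have h67 : G.degree x = 6 ∨ G.degree x = 7 := by
    have hlt : (Finset.univ.filter (fun z => G.Adj x z ∧ G.Adj a0 z)).card + 2 ≤
        (G.neighborFinset x).card := by
      have hsub : insert a0 (insert b0 (Finset.univ.filter (fun z => G.Adj x z ∧ G.Adj a0 z))) ⊆
          G.neighborFinset x := by
        intro z hz
        simp only [Finset.mem_insert, Finset.mem_filter, Finset.mem_univ, true_and] at hz
        rw [mem_neighborFinset]
        rcases hz with rfl | rfl | hz
        · exact ha0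
        · exact hb0
        · exact hz.1
      have := Finset.card_le_card hsub
      rwa [Finset.card_insert_of_notMem (by simp [hab0]),
        Finset.card_insert_of_notMem (by simp [hnab0])] at this
    have := htri x a0 ha0
    omega
  -- a vertex outside the closed neighbourhood
  obtain ⟨y, hyX, hyx, hyN⟩ : ∃ y ∈ X, y ≠ x ∧ ¬ G.Adj x y := by
    by_contra h
    push Not at h
    have h1 : X ⊆ insert x (G.neighborFinset x) := by
      intro z hz
      rw [Finset.mem_insert, mem_neighborFinset]
      by_cases hzx : z = x
      · exact Or.inl hzx
      · exact Or.inr (h z hz hzx)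
    have h2 := Finset.card_le_card h1
    have h2' := Finset.card_insert_le x (G.neighborFinset x)
    have h3 : insert a0 (insert b0 (G.neighborFinset a0)) ⊆ X := by
      intro z hz
      simp only [Finset.mem_insert, mem_neighborFinset] at hz
      rcases hz with rfl | rfl | hz
      · exact hX _ _ ha0.symm
      · exact hX _ _ hb0.symm
      · exact hX _ _ hz.symm
    have h4 := Finset.card_le_card h3
    rw [Finset.card_insert_of_notMem (by simp [hab0]),
      Finset.card_insert_of_notMem (by simp [hnab0]), card_neighborFinset_eq_degree] at h4
    have := hxmin a0 (hX _ _ ha0.symm)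
    omega
  -- its component
  set O : Finset V := X.filter (fun z => z ≠ x ∧ ¬ G.Adj x z) with hO
  have hyO : y ∈ O := Finset.mem_filter.2 ⟨hyX, hyx, hyN⟩
  set D : Set V := ((restr G O).connectedComponentMk y).supp with hD
  have hDconn : (G.induce D).Connected := by
    have h := ((restr G O).connectedComponentMk y).connected_toSimpleGraph
    have h' : ((restr G O).induce D).Connected := h
    exact h'.mono (fun a b h => (show (restr G O).Adj a b from h).1)
  have hyD : y ∈ D := by simp [hD]
  have hDadj : ∀ z ∈ D, ∀ w ∈ O, z ∈ O → G.Adj z w → w ∈ D := by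
    intro z hz w hw hzO h
    exact ConnectedComponent.mem_supp_of_adj_mem_supp _ hz ⟨h, hzO, hw⟩
  have hDO : ∀ z ∈ D, z ∈ O := by
    intro z hz
    by_cases hzy : z = y
    · exact hzy ▸ hyO
    · have hr : (restr G O).Reachable z y := by simpa [hD] using hz
      have := mem_support_of_reachable hzy hr
      obtain ⟨w, hw⟩ := (mem_support _).1 this
      exact hw.2.1
  set S : Finset V := (G.neighborFinset x).filter (fun a => ∃ z ∈ D, G.Adj a z) with hS
  set C : Finset V := Finset.univ.filter (fun z => z ∈ D) with hC
  have hSclique : ∀ a ∈ S, ∀ b ∈ S, a ≠ b → G.Adj a b := by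
    intro a ha b hb hab
    by_contra hnab
    simp only [hS, Finset.mem_filter, mem_neighborFinset] at ha hb
    refine hno (local_minor (C := D) h67 (htri x) ha.1 hb.1 hab hnab hDconn ?_ ha.2 hb.2)
    intro z hz
    exact (Finset.mem_filter.1 (hDO z hz)).2
  have hS4 : S.card ≤ 4 := hcl S (fun a ha => by
    simpa using (Finset.mem_filter.1 ha).1) hSclique
  have hCX : C ⊆ X := by
    intro z hz
    exact (Finset.mem_filter.1 (hDO z (by simpa [hC] using hz))).1
  have hSC : Disjoint S C := by
    rw [Finset.disjoint_left]
    intro z hz hz'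
    have h1 := (Finset.mem_filter.1 (hDO z (by simpa [hC] using hz'))).2.2
    exact h1 (by simpa using (Finset.mem_filter.1 hz).1)
  have hSX : S ⊆ X := by
    intro z hz
    have h1 : G.Adj x z := by simpa using (Finset.mem_filter.1 hz).1
    exact hX _ _ h1.symm
  have hCnb : ∀ z ∈ C, ∀ w, G.Adj z w → w ∈ C ∪ S := by
    intro z hz w hzw
    have hzD : z ∈ D := by simpa [hC] using hz
    have hzO := (Finset.mem_filter.1 (hDO z hzD)).2
    rw [Finset.mem_union]
    by_cases hw : G.Adj x w
    · right
      exact Finset.mem_filter.2 ⟨by simpa using hw, z, hzD, hzw.symm⟩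
    · left
      have hwx : w ≠ x := by
        rintro rfl
        exact hzO.2 hzw.symm
      have hwO : w ∈ O := Finset.mem_filter.2 ⟨hX _ _ hzw.symm, hwx, hw⟩
      simpa [hC] using hDadj z hzD w hwO (hDO z hzD) hzw
  have hyC : y ∈ C := by simpa [hC] using hyD
  have hinter : (C ∪ S) ∩ (X \ C) = S := by
    ext z
    simp only [Finset.mem_inter, Finset.mem_union, Finset.mem_sdiff]
    constructor
    · tauto
    · intro hz
      exact ⟨Or.inr hz, hSX hz, Finset.disjoint_left.1 hSC hz⟩
  have hcount := sep_count (G := G) (A := C ∪ S) (B := X \ C) (by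
      intro p q hpq
      by_cases hp : p ∈ C
      · exact Or.inl ⟨Finset.mem_union_left _ hp, hCnb p hp q hpq⟩
      · by_cases hq : q ∈ C
        · exact Or.inl ⟨hCnb q hq p hpq.symm, Finset.mem_union_left _ hq⟩
        · exact Or.inr ⟨Finset.mem_sdiff.2 ⟨hX _ _ hpq, hp⟩,
            Finset.mem_sdiff.2 ⟨hX _ _ hpq.symm, hq⟩⟩)
    (by rw [hinter]; exact hSclique)
  rw [hinter] at hcount
  have hxC : x ∉ C := by
    intro h
    exact (Finset.mem_filter.1 (hDO x (by simpa [hC] using h))).2.1 rfl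
  have hxS : x ∉ S := by
    intro h
    simpa using (Finset.mem_filter.1 h).1
  have hA : (C ∪ S).card = C.card + S.card := Finset.card_union_of_disjoint hSC.symm
  have hB : (X \ C).card = n - C.card := by rw [Finset.card_sdiff_of_subset hCX, hXn]
  have hCpos : 0 < C.card := Finset.card_pos.2 ⟨y, hyC⟩
  have hCle : C.card ≤ n := hXn ▸ Finset.card_le_card hCX
  have hAlt : (C ∪ S).card < n := by
    rw [← hXn]
    apply Finset.card_lt_card
    rw [Finset.ssubset_iff_of_subset (Finset.union_subset hCX hSX)]
    exact ⟨x, hxX, by simp [hxC, hxS]⟩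
  have hA5 : 5 ≤ (C ∪ S).card := by
    refine (hmin y hyX).trans ?_
    rw [← card_neighborFinset_eq_degree]
    apply Finset.card_le_card
    intro w hw
    exact hCnb y hyC w (by simpa using hw)
  have hB5 : 5 ≤ (X \ C).card := by
    refine hx5.trans ?_
    rw [← card_neighborFinset_eq_degree]
    apply Finset.card_le_card
    intro w hw
    rw [mem_neighborFinset] at hw
    refine Finset.mem_sdiff.2 ⟨hX _ _ hw.symm, fun h => ?_⟩
    exact (Finset.mem_filter.1 (hDO w (by simpa [hC] using h))).2.2 hw
  have hrA := hrestr _ hAlt hA5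
  have hrB := hrestr (X \ C) (by omega) hB5
  have hfin : 4 * S.card ≤ 10 + S.card.choose 2 := by
    generalize S.card = k at hS4
    interval_cases k <;> decide
  omega

end K6

theorem edges_ge_4n_sub_9_hasK6Minor {V : Type*} [Fintype V] (G : SimpleGraph V)
    (hn : 5 ≤ Fintype.card V) (hsize : 4 * Fintype.card V - 9 ≤ G.edgeFinset.card) :
    G.HasCompleteMinor 6 := by
  refine K6.main (Fintype.card V) Finset.univ G Finset.card_univ hn (fun a _ _ => Finset.mem_univ a)
    ?_
  omega
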